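/- arXiv:2207.01785 — 2 statements merged into one kernel-verified Lean document; each statement's English description precedes it below -/
import Mathlib

section
/- Let R be a commutative Noetherian ring, 𝔟 ⊆ 𝔞 ideals of R, M an R-module, and s ≥ 0, t ≥ 0 integers such that: (1) Ext^{s+t−i}_R(R/𝔞, H^i_𝔟(M)) = 0 for all integers i with 0 ≤ i < t or t+1 ≤ i ≤ s+t; (2) Ext^{s+1+i}_R(R/𝔞, H^{t−i}_𝔟(M)) = 0 for all integers 0 ≤ i ≤ t; (3) Ext^{s−1−i}_R(R/𝔞, H^{t+i}_𝔟(M)) = 0 for all integers 0 ≤ i ≤ s−1. Then there is an isomorphism of R-modules Ext^{s+t}_R(R/𝔞, M) ≅ Ext^{s}_R(R/𝔞, H^{t}_𝔟(M)). -/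
open CategoryTheory

universe u

/-- The `R`-module `Ext^i_R(N, M)` for two `R`-modules (objects of `ModuleCat R`). -/
noncomputable def extObj {R : Type u} [CommRing R] (N M : ModuleCat.{u} R) (i : ℕ) :
    ModuleCat.{u} R :=
  ((Ext R (ModuleCat.{u} R) i).obj (Opposite.op N)).obj M

/-- The `R`-module `Ext^i_R(R/𝔞, M)`. -/
noncomputable def extIdeal {R : Type u} [CommRing R] (𝔞 : Ideal R) (i : ℕ)
    (M : ModuleCat.{u} R) : ModuleCat.{u} R :=
  extObj (ModuleCat.of R (R ⧸ 𝔞)) M i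

/-- An `R`-module `M` is `𝔞`-cofinite if `Supp_R M ⊆ V(𝔞)` and `Ext^i_R(R/𝔞, M)` is a finitely
generated `R`-module for every `i ≥ 0`. -/
def IsCofinite {R : Type u} [CommRing R] (𝔞 : Ideal R) (M : ModuleCat.{u} R) : Prop :=
  Module.support R M ⊆ PrimeSpectrum.zeroLocus (𝔞 : Set R) ∧
    ∀ i : ℕ, Module.Finite R (extIdeal 𝔞 i M)

/-- The Krull dimension `dim_R M` of an `R`-module `M`: the Krull dimension of its support,
i.e. the supremum of `dim R/𝔭` over primes `𝔭` in the support of `M`. -/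
noncomputable def moduleDim (R : Type u) [CommRing R] (M : Type u) [AddCommGroup M]
    [Module R M] : WithBot ℕ∞ :=
  Order.krullDim (Module.support R M)

/-- An `R`-module `M` is in `FD_{≤n}` if there is a finitely generated submodule `N ⊆ M`
with `dim_R (M/N) ≤ n`. -/
def MemFD (R : Type u) [CommRing R] (n : ℕ) (M : Type u) [AddCommGroup M] [Module R M] : Prop :=
  ∃ N : Submodule R M, N.FG ∧ moduleDim R (M ⧸ N) ≤ (n : WithBot ℕ∞)

/-- An `R`-module `M` is `𝔞`-torsion if every element is annihilated by some power of `𝔞`. -/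
def IsTorsionIdeal {R : Type u} [CommRing R] (𝔞 : Ideal R) (M : Type u) [AddCommGroup M]
    [Module R M] : Prop :=
  ∀ m : M, ∃ n : ℕ, ∀ a ∈ 𝔞 ^ n, a • m = 0

/-- The arithmetic rank of an ideal `𝔞`: the least `n` such that there exist `a₁, …, aₙ ∈ R`
with `Rad (a₁, …, aₙ) = Rad 𝔞`. -/
noncomputable def arithRank {R : Type u} [CommRing R] (𝔞 : Ideal R) : ℕ :=
  sInf {n : ℕ | ∃ f : Fin n → R, (Ideal.span (Set.range f)).radical = 𝔞.radical}

universe v w t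

section

open Abelian Limits

variable {C : Type u} [Category.{v} C] [Abelian C] [HasExt.{w} C]
variable (R : Type t) [CommRing R] [Linear R C] (N : C)

theorem nonempty_ext_linearEquiv_of_subsingleton_right {S : ShortComplex C} (hS : S.ShortExact)
    (n : ℕ) (h : Subsingleton (Ext N S.X₃ n)) (h' : Subsingleton (Ext N S.X₃ (n + 1))) :
    Nonempty (Ext N S.X₁ (n + 1) ≃ₗ[R] Ext N S.X₂ (n + 1)) := by
  refine ⟨LinearEquiv.ofBijective ((Ext.mk₀ S.f).postcompOfLinear R N (add_zero _)) ⟨?_, ?_⟩⟩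
  · rw [← LinearMap.ker_eq_bot, LinearMap.ker_eq_bot']
    intro x hx
    obtain ⟨y, rfl⟩ := Ext.covariant_sequence_exact₁ N hS x hx rfl
    simp [Subsingleton.elim y 0]
  · intro x
    exact Ext.covariant_sequence_exact₂ N hS x (Subsingleton.elim _ _)

theorem nonempty_ext_linearEquiv_of_subsingleton_left {S : ShortComplex C} (hS : S.ShortExact)
    (n : ℕ) (h : Subsingleton (Ext N S.X₁ n)) (h' : Subsingleton (Ext N S.X₁ (n + 1))) :
    Nonempty (Ext N S.X₂ n ≃ₗ[R] Ext N S.X₃ n) := by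
  refine ⟨LinearEquiv.ofBijective ((Ext.mk₀ S.g).postcompOfLinear R N (add_zero _)) ⟨?_, ?_⟩⟩
  · rw [← LinearMap.ker_eq_bot, LinearMap.ker_eq_bot']
    intro x hx
    obtain ⟨y, rfl⟩ := Ext.covariant_sequence_exact₂ N hS x hx
    simp [Subsingleton.elim y 0]
  · intro x
    exact Ext.covariant_sequence_exact₃ N hS x rfl (Subsingleton.elim _ _)

theorem nonempty_ext_linearEquiv_succ_of_injective {S : ShortComplex C} (hS : S.ShortExact)
    [Injective S.X₂] (n : ℕ) :
    Nonempty (Ext N S.X₃ (n + 1) ≃ₗ[R] Ext N S.X₁ (n + 1 + 1)) := by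
  refine ⟨LinearEquiv.ofBijective (hS.extClass.postcompOfLinear R N rfl) ⟨?_, ?_⟩⟩
  · rw [← LinearMap.ker_eq_bot, LinearMap.ker_eq_bot']
    intro x hx
    obtain ⟨y, rfl⟩ := Ext.covariant_sequence_exact₃ N hS x rfl hx
    simp [Ext.eq_zero_of_injective y]
  · intro x
    exact Ext.covariant_sequence_exact₁ N hS x (Ext.eq_zero_of_injective _) rfl

theorem subsingleton_ext_middle {S : ShortComplex C} (hS : S.ShortExact) (n : ℕ)
    (h : Subsingleton (Ext N S.X₁ n)) (h' : Subsingleton (Ext N S.X₃ n)) :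
    Subsingleton (Ext N S.X₂ n) := by
  refine subsingleton_of_forall_eq 0 fun x ↦ ?_
  obtain ⟨y, rfl⟩ := Ext.covariant_sequence_exact₂ N hS x (Subsingleton.elim _ _)
  simp [Subsingleton.elim y 0]

end

namespace CochainComplex

open Abelian Limits HomologicalComplex

variable {C : Type u} [Category.{v} C] [Abelian C]
  (J : CochainComplex C ℕ)

/-- The boundaries of a cochain complex, as the kernel of the projection from cycles to
homology. -/
noncomputable def boundaries (n : ℕ) : C := kernel (J.homologyπ n)

/-- The inclusion of boundaries into cycles. -/
noncomputable def iBoundaries (n : ℕ) : J.boundaries n ⟶ J.cycles n := kernel.ι (J.homologyπ n)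

/-- The differential, as a map onto the boundaries. -/
noncomputable def toBoundaries (m n : ℕ) : J.X m ⟶ J.boundaries n :=
  kernel.lift _ (J.toCycles m n) (J.toCycles_comp_homologyπ m n)

@[simp]
theorem toBoundaries_iBoundaries (m n : ℕ) :
    J.toBoundaries m n ≫ J.iBoundaries n = J.toCycles m n :=
  kernel.lift_ι _ _ _

instance (n : ℕ) : Mono (J.iBoundaries n) :=
  inferInstanceAs (Mono (kernel.ι (J.homologyπ n)))

/-- The sequence `0 → B^n → Z^n → H^n → 0`. -/
noncomputable abbrev homologySequence (n : ℕ) : ShortComplex C :=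
  ShortComplex.mk (J.iBoundaries n) (J.homologyπ n) (kernel.condition _)

theorem homologySequence_shortExact (n : ℕ) : (J.homologySequence n).ShortExact where
  exact := ShortComplex.exact_kernel _
  mono_f := inferInstanceAs (Mono (J.iBoundaries n))
  epi_g := inferInstanceAs (Epi (J.homologyπ n))

theorem epi_toBoundaries (n : ℕ) :
    Epi (J.toBoundaries ((ComplexShape.up ℕ).prev n) n) := by
  have h : (ShortComplex.mk _ _ (J.toCycles_comp_homologyπ ((ComplexShape.up ℕ).prev n) n)).Exact :=
    ShortComplex.exact_of_g_is_cokernel _ (J.homologyIsCokernel _ n rfl)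
  exact h.epi_kernelLift

theorem isZero_boundaries_zero : IsZero (J.boundaries 0) := by
  have := J.epi_toBoundaries 0
  refine IsZero.of_epi_eq_zero (J.toBoundaries ((ComplexShape.up ℕ).prev 0) 0) ?_
  rw [← cancel_mono (J.iBoundaries 0), ← cancel_mono (J.iCycles 0)]
  simp

/-- The sequence `0 → Z^n → X^n → B^{n+1} → 0`. -/
noncomputable abbrev boundarySequence (n : ℕ) : ShortComplex C :=
  ShortComplex.mk (J.iCycles n) (J.toBoundaries n (n + 1)) (by
    rw [← cancel_mono (J.iBoundaries _), ← cancel_mono (J.iCycles _)]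
    simp)

theorem boundarySequence_shortExact (n : ℕ) : (J.boundarySequence n).ShortExact where
  exact := by
    have : Mono (J.boundarySequence n).f := inferInstanceAs (Mono (J.iCycles n))
    refine ShortComplex.exact_of_f_is_kernel _ (KernelFork.IsLimit.ofι' _ _ fun {A} (k : A ⟶ J.X n)
      (hk : k ≫ J.toBoundaries n (n + 1) = 0) ↦
      ⟨J.liftCycles k (n + 1) (by simp) ?_, J.liftCycles_i _ _ _ _⟩)
    rw [← J.toCycles_i, ← toBoundaries_iBoundaries, Category.assoc, ← Category.assoc, hk,
      zero_comp]
  mono_f := inferInstanceAs (Mono (J.iCycles n))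
  epi_g := by
    have := J.epi_toBoundaries (n + 1)
    rwa [CochainComplex.prev_nat_succ] at this

variable [HasExt.{w} C] (R : Type t) [CommRing R] [Linear R C] (N : C)

instance (n : ℕ) [Injective (J.X n)] : Injective (J.boundarySequence n).X₂ :=
  inferInstanceAs (Injective (J.X n))

theorem subsingleton_ext_boundaries_succ {q k : ℕ} [Injective (J.X q)]
    (h : Subsingleton (Ext N (J.cycles q) (k + 1 + 1))) :
    Subsingleton (Ext N (J.boundaries (q + 1)) (k + 1)) := by
  obtain ⟨e⟩ := nonempty_ext_linearEquiv_succ_of_injective ℤ N (J.boundarySequence_shortExact q) k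
  exact e.toEquiv.subsingleton_congr.2 h

theorem subsingleton_ext_boundaries_zero (k : ℕ) :
    Subsingleton (Ext N (J.boundaries 0) k) :=
  subsingleton_of_forall_eq 0 fun x ↦ by
    rw [← x.comp_mk₀_id, J.isZero_boundaries_zero.eq_of_src (𝟙 _) 0, Ext.mk₀_zero, Ext.comp_zero]

variable [∀ i, Injective (J.X i)]

theorem subsingleton_ext_cycles (n t : ℕ)
    (h : ∀ i k, i + (k + 1) = n → i < t → Subsingleton (Ext N (J.homology i) (k + 1))) (q k : ℕ)
    (hn : q + (k + 1) = n) (hq : q < t) : Subsingleton (Ext N (J.cycles q) (k + 1)) := by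
  induction q generalizing k with
  | zero =>
    exact subsingleton_ext_middle N (J.homologySequence_shortExact 0) _
      (J.subsingleton_ext_boundaries_zero N _) (h _ _ hn hq)
  | succ q ih =>
    exact subsingleton_ext_middle N (J.homologySequence_shortExact (q + 1)) _
      (J.subsingleton_ext_boundaries_succ N (ih (k + 1) (by lia) (by lia))) (h _ _ hn hq)

theorem subsingleton_ext_boundaries (n t : ℕ)
    (h : ∀ i k, i + (k + 1) = n → i < t → Subsingleton (Ext N (J.homology i) (k + 1))) (q k : ℕ)
    (hn : q + (k + 1) = n) (hq : q ≤ t) : Subsingleton (Ext N (J.boundaries q) (k + 1)) := by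
  cases q with
  | zero => exact J.subsingleton_ext_boundaries_zero N _
  | succ q =>
    exact J.subsingleton_ext_boundaries_succ N
      (J.subsingleton_ext_cycles N n t h q (k + 1) (by lia) (by lia))

theorem nonempty_ext_cycles_linearEquiv (n t j k : ℕ) (hn : t + j + (k + 1) = n)
    (h : ∀ i k, i + k = n → t < i → Subsingleton (Ext N (J.homology i) k))
    (h' : ∀ i k, i + k + 1 = n → t ≤ i → Subsingleton (Ext N (J.homology i) k))
    (m : ℕ) (hm : k + 1 + j = m) :
    Nonempty (Ext N (J.cycles (t + j)) (k + 1) ≃ₗ[R] Ext N (J.cycles t) m) := by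
  induction j generalizing k with
  | zero => subst hm; exact ⟨LinearEquiv.refl _ _⟩
  | succ j ih =>
    obtain ⟨e₁⟩ := nonempty_ext_linearEquiv_of_subsingleton_right R N
      (J.homologySequence_shortExact (t + j + 1)) k (h' _ _ (by lia) (by lia))
      (h _ _ (by lia) (by lia))
    obtain ⟨e₂⟩ := nonempty_ext_linearEquiv_succ_of_injective R N
      (J.boundarySequence_shortExact (t + j)) k
    obtain ⟨e₃⟩ := ih (k + 1) (by lia) (by lia)
    exact ⟨e₁.symm ≪≫ₗ e₂ ≪≫ₗ e₃⟩

/-- If `Hom(N, H^{q+1}) = 0`, then `Ext^1(N, Z^q)` is the degree `q + 1` cohomology of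
`Hom(N, J)`. -/
theorem exists_hom_cycles_linearMap_ext_one (q : ℕ)
    (h : Subsingleton (Ext N (J.homology (q + 1)) 0)) :
    ∃ f : (N ⟶ J.cycles (q + 1)) →ₗ[R] Ext N (J.cycles q) 1, Function.Surjective f ∧
      ∀ z, f z = 0 ↔ ∃ g : N ⟶ J.X q, g ≫ J.toCycles q (q + 1) = z := by
  have hb : Function.Bijective (Linear.rightComp R N (J.iBoundaries (q + 1))) := by
    refine ⟨fun x y hxy ↦ (cancel_mono (J.iBoundaries (q + 1))).1 hxy, fun z ↦ ?_⟩
    have hz : z ≫ J.homologyπ (q + 1) = 0 :=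
      Ext.homEquiv₀.symm.injective (Subsingleton.elim _ _)
    exact ⟨kernel.lift _ z hz, kernel.lift_ι _ _ _⟩
  let e := LinearEquiv.ofBijective _ hb
  have hS := J.boundarySequence_shortExact q
  let δ : Ext N (J.boundaries (q + 1)) 0 →ₗ[R] Ext N (J.cycles q) 1 :=
    hS.extClass.postcompOfLinear R N (zero_add 1)
  refine ⟨δ ∘ₗ Ext.linearEquiv₀.symm.toLinearMap ∘ₗ e.symm.toLinearMap, ?_, fun z ↦ ?_⟩
  · have hδ : Function.Surjective δ := fun x ↦
      Ext.covariant_sequence_exact₁ N hS x (Ext.eq_zero_of_injective _) (zero_add 1)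
    exact hδ.comp (Ext.linearEquiv₀.symm.surjective.comp e.symm.surjective)
  · obtain ⟨b, rfl⟩ := e.surjective z
    have hδ : δ (Ext.mk₀ b) = 0 ↔ ∃ g : N ⟶ J.X q, g ≫ J.toBoundaries q (q + 1) = b := by
      refine ⟨fun hb ↦ ?_, ?_⟩
      · obtain ⟨y, hy⟩ := Ext.covariant_sequence_exact₃ N hS (Ext.mk₀ b) (zero_add 1) hb
        obtain ⟨g, rfl⟩ := (Ext.mk₀_bijective _ _).2 y
        rw [Ext.mk₀_comp_mk₀] at hy
        exact ⟨g, (Ext.mk₀_bijective _ _).1 hy⟩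
      · rintro ⟨g, rfl⟩
        change (Ext.mk₀ (g ≫ (J.boundarySequence q).g)).comp hS.extClass (zero_add 1) = 0
        rw [← Ext.mk₀_comp_mk₀, Ext.comp_assoc_of_second_deg_zero, hS.comp_extClass, Ext.comp_zero]
    simp only [LinearMap.comp_apply, LinearEquiv.coe_coe, LinearEquiv.symm_apply_apply]
    refine hδ.trans (exists_congr fun g ↦ ?_)
    change _ ↔ _ = b ≫ J.iBoundaries (q + 1)
    rw [← cancel_mono (J.iBoundaries (q + 1)), Category.assoc, toBoundaries_iBoundaries]

/-- If the terms of total degrees `s + t - 1`, `s + t`, `s + t + 1` which can interact with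
`Ext^s(N, H^t(J))` vanish, then `Ext^s(N, H^t(J))` is the degree `s + t` cohomology
of `Hom(N, J)`. -/
theorem exists_hom_cycles_linearMap_ext_homology (s t n : ℕ) (hn : s + t = n)
    (h₁ : ∀ i k, i + k = n → i ≠ t → Subsingleton (Ext N (J.homology i) k))
    (h₂ : ∀ i k, i + k = n + 1 → i ≤ t → Subsingleton (Ext N (J.homology i) k))
    (h₃ : ∀ i k, i + k + 1 = n → t ≤ i → Subsingleton (Ext N (J.homology i) k)) :
    ∃ f : (N ⟶ J.cycles n) →ₗ[R] Ext N (J.homology t) s, Function.Surjective f ∧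
      ∀ z, f z = 0 ↔ ∃ g : N ⟶ J.X ((ComplexShape.up ℕ).prev n), g ≫ J.toCycles _ n = z := by
  have hB₁ (k) (hk : t + (k + 1) = n) : Subsingleton (Ext N (J.boundaries t) (k + 1)) :=
    J.subsingleton_ext_boundaries N n t (fun i k hi hk ↦ h₁ i (k + 1) hi hk.ne) t k hk le_rfl
  have hB₂ (k) (hk : t + (k + 1) = n + 1) : Subsingleton (Ext N (J.boundaries t) (k + 1)) :=
    J.subsingleton_ext_boundaries N (n + 1) t (fun i k hi hk ↦ h₂ i (k + 1) hi hk.le) t k hk le_rfl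
  have hS := J.homologySequence_shortExact t
  cases s with
  | zero =>
    obtain rfl : t = n := by lia
    refine ⟨Ext.linearEquiv₀.symm.toLinearMap ∘ₗ Linear.rightComp R N (J.homologyπ t), ?_,
      fun z ↦ ?_⟩
    · intro x
      have := hB₂ 0 rfl
      obtain ⟨y, rfl⟩ := Ext.covariant_sequence_exact₃ N hS x (zero_add 1) (Subsingleton.elim _ _)
      obtain ⟨g, rfl⟩ := (Ext.mk₀_bijective _ _).2 y
      exact ⟨g, (Ext.mk₀_comp_mk₀ _ _).symm⟩
    · rw [LinearMap.comp_apply, LinearEquiv.coe_coe, LinearEquiv.map_eq_zero_iff]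
      change z ≫ J.homologyπ t = 0 ↔ _
      refine ⟨fun hz ↦ ?_, ?_⟩
      · obtain ⟨b, rfl⟩ : ∃ b, b ≫ J.iBoundaries t = z :=
          ⟨kernel.lift _ z hz, kernel.lift_ι _ _ _⟩
        cases t with
        | zero =>
          refine ⟨0, ?_⟩
          rw [J.isZero_boundaries_zero.eq_of_tgt b 0, zero_comp, zero_comp]
        | succ t =>
          have := J.subsingleton_ext_cycles N (t + 1) (t + 1)
            (fun i k hi hk ↦ h₁ i (k + 1) hi hk.ne) t 0 rfl (by lia)
          obtain ⟨y, hy⟩ := Ext.covariant_sequence_exact₃ N (J.boundarySequence_shortExact t)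
            (Ext.mk₀ b) (zero_add 1) (Subsingleton.elim _ _)
          obtain ⟨g, rfl⟩ := (Ext.mk₀_bijective _ _).2 y
          rw [Ext.mk₀_comp_mk₀] at hy
          obtain rfl : g ≫ J.toBoundaries t (t + 1) = b := (Ext.mk₀_bijective _ _).1 hy
          rw [CochainComplex.prev_nat_succ]
          exact ⟨g, by rw [Category.assoc, toBoundaries_iBoundaries]⟩
      · rintro ⟨g, rfl⟩
        rw [Category.assoc, J.toCycles_comp_homologyπ, comp_zero]
  | succ s =>
    obtain rfl : t + s + 1 = n := by lia
    obtain ⟨f, hf, hf'⟩ := J.exists_hom_cycles_linearMap_ext_one R N (t + s)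
      (h₁ _ _ (by lia) (by lia))
    obtain ⟨e₁⟩ := J.nonempty_ext_cycles_linearEquiv R N _ t s 0 rfl
      (fun i k hi hk ↦ h₁ i k hi hk.ne') h₃ (s + 1) (by lia)
    obtain ⟨e₂⟩ := nonempty_ext_linearEquiv_of_subsingleton_left R N hS (s + 1)
      (hB₁ _ (by lia)) (hB₂ _ (by lia))
    refine ⟨(e₁ ≪≫ₗ e₂).toLinearMap ∘ₗ f, (e₁ ≪≫ₗ e₂).surjective.comp hf, fun z ↦ ?_⟩
    rw [LinearMap.comp_apply, LinearEquiv.coe_coe, LinearEquiv.map_eq_zero_iff, hf',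
      CochainComplex.prev_nat_succ]

end CochainComplex

namespace HomologicalComplex

variable {R : Type t} [Ring R] {ι : Type*} {c : ComplexShape ι}
  (K : HomologicalComplex (ModuleCat.{v} R) c)

theorem exists_iCycles_eq {i j : ι} (hij : c.next i = j) (x : K.X i) (hx : K.d i j x = 0) :
    ∃ z, K.iCycles i z = x :=
  (ShortComplex.moduleCat_exact_iff _).1 (ShortComplex.exact_of_f_is_kernel
    (ShortComplex.mk _ _ (K.iCycles_d i j)) (K.cyclesIsKernel i j hij)) x hx

theorem iCycles_injective (i : ι) : Function.Injective (K.iCycles i) :=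
  (ModuleCat.mono_iff_injective _).1 inferInstance

theorem homologyπ_surjective (i : ι) : Function.Surjective (K.homologyπ i) :=
  (ModuleCat.epi_iff_surjective _).1 inferInstance

theorem homologyπ_apply_eq_zero_iff {i j : ι} (hij : c.prev j = i) (z : K.cycles j) :
    K.homologyπ j z = 0 ↔ ∃ x, K.d i j x = K.iCycles j z := by
  refine ⟨fun hz ↦ ?_, ?_⟩
  · obtain ⟨x, rfl⟩ := (ShortComplex.moduleCat_exact_iff _).1 (ShortComplex.exact_of_g_is_cokernel
      (ShortComplex.mk _ _ (K.toCycles_comp_homologyπ i j)) (K.homologyIsCokernel i j hij)) z hz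
    exact ⟨x, congr($(K.toCycles_i i j) x).symm⟩
  · rintro ⟨x, hx⟩
    obtain rfl : K.toCycles i j x = z := by
      refine K.iCycles_injective j ?_
      rw [← hx]
      exact congr($(K.toCycles_i i j) x)
    exact congr($(K.toCycles_comp_homologyπ i j) x)

end HomologicalComplex

section

open HomologicalComplex Opposite

theorem LinearMap.exists_linearEquiv_of_surjective_of_ker_eq {R A B C : Type*} [Ring R]
    [AddCommGroup A] [Module R A] [AddCommGroup B] [Module R B] [AddCommGroup C] [Module R C]
    (f : A →ₗ[R] B) (g : A →ₗ[R] C) (hf : Function.Surjective f) (hg : Function.Surjective g)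
    (h : ∀ a, f a = 0 ↔ g a = 0) : ∃ e : B ≃ₗ[R] C, ∀ a, e (f a) = g a := by
  have hk : LinearMap.ker f = LinearMap.ker g := by ext a; exact h a
  refine ⟨(f.quotKerEquivOfSurjective hf).symm ≪≫ₗ Submodule.quotEquivOfEq _ _ hk ≪≫ₗ
    g.quotKerEquivOfSurjective hg, fun a ↦ ?_⟩
  have : (f.quotKerEquivOfSurjective hf).symm (f a) = Submodule.Quotient.mk a := by
    rw [LinearEquiv.symm_apply_eq]
    rfl
  rw [LinearEquiv.trans_apply, LinearEquiv.trans_apply, this]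
  rfl

theorem CategoryTheory.inv_comp_comp_eq_of_comm {D : Type*} [Category* D] {A A' B B' X X' : D}
    (a : A ≅ A') (b : B ≅ B') (p : A ⟶ X) (q : B ⟶ X') (l : X ⟶ X') (m : A ⟶ B) (m' : A' ⟶ B')
    (h : p ≫ l = m ≫ q) (h' : m ≫ b.hom = a.hom ≫ m') : a.inv ≫ p ≫ l = m' ≫ b.inv ≫ q := by
  rw [h, Iso.inv_comp_eq, ← Category.assoc a.hom, ← h', Category.assoc,
    b.hom_inv_id_assoc]

variable {C : Type u} [Category.{v} C] [Abelian C] {R : Type t} [CommRing R] [Linear R C]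

namespace ChainComplex

/-- The functoriality of `ChainComplex.linearYonedaObj`. -/
noncomputable def linearYonedaMap {K L : ChainComplex C ℕ} (φ : K ⟶ L) (R : Type t) [CommRing R]
    [Linear R C] (Y : C) : L.linearYonedaObj R Y ⟶ K.linearYonedaObj R Y :=
  (unopFunctor _ _).map
    (((((linearYoneda R C).obj Y).rightOp.mapHomologicalComplex _).map φ).op)

end ChainComplex

namespace CategoryTheory.ProjectiveResolution

theorem isoExt_hom_naturality [EnoughProjectives C] {X X' : C} {P : ProjectiveResolution X}
    {Q : ProjectiveResolution X'} {g : X ⟶ X'} (φ : Hom P Q g) (n : ℕ) (Y : C) :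
    ((_root_.Ext R C n).map g.op).app Y ≫ (P.isoExt n Y).hom =
      (Q.isoExt n Y).hom ≫ homologyMap (ChainComplex.linearYonedaMap φ.hom R Y) n := by
  have h₁ := isoLeftDerivedObj_inv_naturality g P Q φ.hom
    (by simpa using φ.hom_f_zero_comp_π_f_zero) ((linearYoneda R C).obj Y).rightOp n
  have h₂ := homologyOp_hom_naturality (ChainComplex.linearYonedaMap φ.hom R Y) n
  let F := ((linearYoneda R C).obj Y).rightOp
  let a := homologyOp (P.complex.linearYonedaObj R Y) n
  let b := homologyOp (Q.complex.linearYonedaObj R Y) n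
  have h₃ := inv_comp_comp_eq_of_comm a b (P.isoLeftDerivedObj F n).inv
    (Q.isoLeftDerivedObj F n).inv ((F.leftDerived n).map g)
    _ (homologyMap (ChainComplex.linearYonedaMap φ.hom R Y) n).op h₁ h₂
  exact congrArg Quiver.Hom.unop h₃

variable [HasExt.{w} C] {X Y : C} (P : ProjectiveResolution X)

theorem smul_extMk {n : ℕ} (r : R) (f : P.complex.X n ⟶ Y) (m : ℕ) (hm : n + 1 = m)
    (hf : P.complex.d m n ≫ f = 0) :
    r • P.extMk f m hm hf = P.extMk (r • f) m hm (by simp [hf]) := by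
  rw [Abelian.Ext.smul_eq_comp_mk₀, extMk_comp_mk₀]
  simp

theorem extMk_zero_eq_zero_iff (f : P.complex.X 0 ⟶ Y) (m : ℕ) (hm : 0 + 1 = m)
    (hf : P.complex.d m 0 ≫ f = 0) : P.extMk f m hm hf = 0 ↔ f = 0 := by
  refine ⟨fun h ↦ ?_, fun h ↦ by subst h; simp⟩
  rw [← P.extEquivCohomologyClass.apply_eq_iff_eq, extEquivCohomologyClass_extMk,
    extEquivCohomologyClass_zero, CochainComplex.HomComplex.CohomologyClass.mk_eq_zero_iff,
    CochainComplex.HomComplex.Cocycle.toSingleMk_mem_coboundaries_iff _ _ _ _ _ 1 (by simp)] at h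
  obtain ⟨g, hg⟩ := h
  have hX : Limits.IsZero (P.cochainComplex.X 1) := CochainComplex.isZero_of_isStrictlyLE _ 0 _
  rw [hX.eq_of_src g 0, Limits.comp_zero] at hg
  rw [← cancel_epi (P.cochainComplexXIso (-(0 : ℕ)) 0 rfl).hom, Limits.comp_zero]
  exact hg.symm

theorem extMk_eq_zero_iff_prev {n : ℕ} (f : P.complex.X n ⟶ Y) (m : ℕ) (hm : n + 1 = m)
    (hf : P.complex.d m n ≫ f = 0) :
    P.extMk f m hm hf = 0 ↔
      ∃ g : P.complex.X ((ComplexShape.up ℕ).prev n) ⟶ Y, P.complex.d n _ ≫ g = f := by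
  cases n with
  | zero =>
    rw [extMk_zero_eq_zero_iff]
    refine ⟨fun h ↦ ⟨0, by simp [h]⟩, ?_⟩
    rintro ⟨g, rfl⟩
    rw [P.complex.shape _ _ (by simp), Limits.zero_comp]
  | succ n => rw [P.extMk_eq_zero_iff f m hm hf n rfl, CochainComplex.prev_nat_succ]

end CategoryTheory.ProjectiveResolution

namespace CategoryTheory.ProjectiveResolution

variable {X Y : C} (P : ProjectiveResolution X)

variable (R) in
/-- The morphism `P_n ⟶ Y` underlying a cycle of `Hom(P, Y)`. -/
noncomputable def cycleHom {n : ℕ} (c : (P.complex.linearYonedaObj R Y).cycles n) :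
    P.complex.X n ⟶ Y :=
  (P.complex.linearYonedaObj R Y).iCycles n c

theorem d_comp_cycleHom {n : ℕ} (m : ℕ) (c : (P.complex.linearYonedaObj R Y).cycles n) :
    P.complex.d m n ≫ P.cycleHom R c = 0 :=
  congr($((P.complex.linearYonedaObj R Y).iCycles_d n m) c)

theorem cycleHom_add {n : ℕ} (c c' : (P.complex.linearYonedaObj R Y).cycles n) :
    P.cycleHom R (c + c') = P.cycleHom R c + P.cycleHom R c' :=
  map_add ((P.complex.linearYonedaObj R Y).iCycles n).hom _ _

theorem cycleHom_smul {n : ℕ} (r : R) (c : (P.complex.linearYonedaObj R Y).cycles n) :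
    P.cycleHom R (r • c) = r • P.cycleHom R c :=
  map_smul ((P.complex.linearYonedaObj R Y).iCycles n).hom _ _

theorem exists_cycleHom_eq {n : ℕ} (f : P.complex.X n ⟶ Y)
    (hf : P.complex.d (n + 1) n ≫ f = 0) : ∃ c, P.cycleHom R c = f :=
  exists_iCycles_eq (P.complex.linearYonedaObj R Y) (CochainComplex.next ℕ n) f hf

variable [HasExt.{v} C]

variable (R) (Y) in
/-- The class in `Abelian.Ext` of a cocycle of the complex computing `Ext`. -/
noncomputable def cyclesToExt (n : ℕ) :
    (P.complex.linearYonedaObj R Y).cycles n →ₗ[R] Abelian.Ext X Y n where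
  toFun c := P.extMk (P.cycleHom R c) (n + 1) rfl (P.d_comp_cycleHom _ _)
  map_add' c c' := by simp [add_extMk, cycleHom_add]
  map_smul' r c := by simp [smul_extMk, cycleHom_smul]

theorem cyclesToExt_surjective (n : ℕ) : Function.Surjective (P.cyclesToExt R Y n) := by
  intro x
  obtain ⟨f, hf, rfl⟩ := P.extMk_surjective x (n + 1) rfl
  obtain ⟨c, rfl⟩ := P.exists_cycleHom_eq (R := R) f hf
  exact ⟨c, rfl⟩

theorem cyclesToExt_eq_zero_iff (n : ℕ) (c : (P.complex.linearYonedaObj R Y).cycles n) :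
    P.cyclesToExt R Y n c = 0 ↔ (P.complex.linearYonedaObj R Y).homologyπ n c = 0 :=
  (P.extMk_eq_zero_iff_prev _ _ rfl (P.d_comp_cycleHom _ _)).trans
    (homologyπ_apply_eq_zero_iff (P.complex.linearYonedaObj R Y) rfl c).symm

variable (R) (Y) in
theorem exists_ext_linearEquiv [EnoughProjectives C] (n : ℕ) :
    ∃ e : ((_root_.Ext R C n).obj (op X)).obj Y ≃ₗ[R] Abelian.Ext X Y n,
      ∀ c, e ((P.isoExt n Y).inv ((P.complex.linearYonedaObj R Y).homologyπ n c)) =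
        P.cyclesToExt R Y n c := by
  obtain ⟨e, he⟩ := LinearMap.exists_linearEquiv_of_surjective_of_ker_eq
    ((P.complex.linearYonedaObj R Y).homologyπ n).hom (P.cyclesToExt R Y n)
    (homologyπ_surjective _ _) (P.cyclesToExt_surjective n)
    fun c ↦ (P.cyclesToExt_eq_zero_iff n c).symm
  refine ⟨(P.isoExt n Y).toLinearEquiv ≪≫ₗ e, fun c ↦ ?_⟩
  rw [← he]
  exact congrArg e ((P.isoExt n Y).toLinearEquiv.apply_symm_apply _)

end CategoryTheory.ProjectiveResolution

variable (R) in
/-- The comparison between `Ext`, defined as a derived functor in the first variable, and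
`Abelian.Ext`, defined in the derived category. -/
noncomputable def extLinearEquiv [EnoughProjectives C] [HasExt.{v} C] (X Y : C) (n : ℕ) :
    ((_root_.Ext R C n).obj (op X)).obj Y ≃ₗ[R] Abelian.Ext X Y n :=
  ((projectiveResolution X).exists_ext_linearEquiv R Y n).choose

theorem extLinearEquiv_naturality [EnoughProjectives C] [HasExt.{v} C]
    {X X' : C} (g : X ⟶ X') (Y : C) (n : ℕ)
    (x : ((_root_.Ext R C n).obj (op X')).obj Y) :
    extLinearEquiv R X Y n (((_root_.Ext R C n).map g.op).app Y x) =
      (Abelian.Ext.mk₀ g).comp (extLinearEquiv R X' Y n x) (zero_add n) := by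
  let P := projectiveResolution X
  let Q := projectiveResolution X'
  let φ : ProjectiveResolution.Hom P Q g :=
    { hom := ProjectiveResolution.lift g P Q
      hom_f_zero_comp_π_f_zero :=
        congr(HomologicalComplex.Hom.f $(ProjectiveResolution.lift_commutes g P Q) 0) }
  obtain ⟨c, rfl⟩ : ∃ c, (Q.isoExt n Y).inv ((Q.complex.linearYonedaObj R Y).homologyπ n c) = x :=
    ((Q.isoExt (R := R) n Y).toLinearEquiv.symm.surjective.comp (homologyπ_surjective _ _)) x
  have h : ((_root_.Ext R C n).map g.op).app Y
      ((Q.isoExt n Y).inv ((Q.complex.linearYonedaObj R Y).homologyπ n c)) =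
      (P.isoExt n Y).inv ((P.complex.linearYonedaObj R Y).homologyπ n
        (cyclesMap (ChainComplex.linearYonedaMap φ.hom R Y) n c)) := by
    have h₁ := congr($(ProjectiveResolution.isoExt_hom_naturality (R := R) φ n Y)
      ((Q.isoExt n Y).inv ((Q.complex.linearYonedaObj R Y).homologyπ n c)))
    refine (P.isoExt n Y).toLinearEquiv.injective ?_
    refine h₁.trans ?_
    refine (congrArg (homologyMap (ChainComplex.linearYonedaMap φ.hom R Y) n)
      ((Q.isoExt n Y).toLinearEquiv.apply_symm_apply _)).trans ?_
    refine Eq.trans ?_ ((P.isoExt n Y).toLinearEquiv.apply_symm_apply _).symm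
    exact congr($(homologyπ_naturality (ChainComplex.linearYonedaMap φ.hom R Y) n) c)
  have hP := ((projectiveResolution X).exists_ext_linearEquiv R Y n).choose_spec
  have hQ := ((projectiveResolution X').exists_ext_linearEquiv R Y n).choose_spec
  rw [h]
  refine (hP _).trans (Eq.trans ?_
    (congrArg (fun y ↦ (Abelian.Ext.mk₀ g).comp y (zero_add n)) (hQ c).symm))
  refine Eq.trans ?_ (ProjectiveResolution.mk₀_comp_extMk _ _ rfl
    (Q.d_comp_cycleHom _ c) φ).symm
  have h₂ : P.cycleHom R (cyclesMap (ChainComplex.linearYonedaMap φ.hom R Y) n c) =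
      φ.hom.f n ≫ Q.cycleHom R c :=
    congr($(cyclesMap_i (ChainComplex.linearYonedaMap φ.hom R Y) n) c)
  dsimp only [ProjectiveResolution.cyclesToExt, LinearMap.coe_mk, AddHom.coe_mk]
  congr 1

end

namespace Ideal

variable {R : Type u} [CommRing R] (I : Ideal R) (M : Type v) [AddCommGroup M] [Module R M]

/-- The submodule of elements annihilated by some power of `I`. -/
def powerTorsion : Submodule R M where
  carrier := {x | ∃ n : ℕ, ∀ r ∈ I ^ n, r • x = 0}
  add_mem' := by
    rintro x y ⟨m, hm⟩ ⟨n, hn⟩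
    refine ⟨max m n, fun r hr ↦ ?_⟩
    rw [smul_add, hm r (pow_le_pow_right (le_max_left _ _) hr),
      hn r (pow_le_pow_right (le_max_right _ _) hr), add_zero]
  zero_mem' := ⟨0, fun _ _ ↦ smul_zero _⟩
  smul_mem' := by
    rintro a x ⟨n, hn⟩
    exact ⟨n, fun r hr ↦ by rw [smul_comm, hn r hr, smul_zero]⟩

variable {M}

theorem mem_powerTorsion_iff {x : M} : x ∈ I.powerTorsion M ↔ ∃ n : ℕ, ∀ r ∈ I ^ n, r • x = 0 :=
  Iff.rfl

theorem map_mem_powerTorsion {N : Type w} [AddCommGroup N] [Module R N] (f : M →ₗ[R] N) {x : M}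
    (hx : x ∈ I.powerTorsion M) : f x ∈ I.powerTorsion N := by
  obtain ⟨n, hn⟩ := hx
  exact ⟨n, fun r hr ↦ by rw [← map_smul, hn r hr, map_zero]⟩

theorem exists_pow_smul_eq_zero_of_fg [Module.Finite R M] (h : I.powerTorsion M = ⊤) :
    ∃ n : ℕ, ∀ r ∈ I ^ n, ∀ x : M, r • x = 0 := by
  classical
  obtain ⟨s, hs⟩ := Module.Finite.fg_top (R := R) (M := M)
  choose f hf using fun x : M ↦ (I.mem_powerTorsion_iff (x := x)).1 (h ▸ Submodule.mem_top)
  refine ⟨s.sup f, fun r hr x ↦ ?_⟩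
  have hx : x ∈ Submodule.span R (s : Set M) := hs ▸ Submodule.mem_top
  induction hx using Submodule.span_induction with
  | mem x hx => exact hf x r (pow_le_pow_right (Finset.le_sup hx) hr)
  | zero => exact smul_zero _
  | add x y _ _ hx hy => rw [smul_add, hx, hy, add_zero]
  | smul a x _ hx => rw [smul_comm, hx, smul_zero]

theorem exists_map_eq_zero_of_mem_pow [IsNoetherianRing R] {J : Ideal R}
    (g : J →ₗ[R] I.powerTorsion M) : ∃ m : ℕ, ∀ x : J, (x : R) ∈ I ^ m → g x = 0 := by
  obtain ⟨n, hn⟩ := I.exists_pow_smul_eq_zero_of_fg (M := LinearMap.range g) <| by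
    rw [eq_top_iff]
    rintro ⟨⟨x, n, hn⟩, hx⟩ -
    exact ⟨n, fun r hr ↦ Subtype.ext (Subtype.ext (hn r hr))⟩
  obtain ⟨k, hk⟩ := I.exists_pow_inf_eq_pow_smul (M := R) J
  refine ⟨n + k, fun x hx ↦ ?_⟩
  have hx' : (x : R) ∈ I ^ n * J := by
    have h := (hk (n + k) (by lia)).le ⟨by simpa using hx, x.2⟩
    rw [Nat.add_sub_cancel] at h
    exact Submodule.smul_mono le_rfl inf_le_right h
  have hle : I ^ n * J ≤ (LinearMap.ker g).map J.subtype := by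
    refine Ideal.mul_le.2 fun r hr y hy ↦ ⟨r • ⟨y, hy⟩, ?_, rfl⟩
    rw [SetLike.mem_coe, LinearMap.mem_ker, map_smul]
    exact congrArg Subtype.val (hn r hr ⟨_, ⟨y, hy⟩, rfl⟩)
  obtain ⟨y, hy, hxy⟩ := hle hx'
  obtain rfl : y = x := Subtype.ext hxy
  exact hy

theorem injective_powerTorsion [IsNoetherianRing R] (Q : Type u) [AddCommGroup Q] [Module R Q]
    [Module.Injective R Q] : Module.Injective R (I.powerTorsion Q) := by
  refine Module.Baer.injective fun J g ↦ ?_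
  obtain ⟨m, hm⟩ := I.exists_map_eq_zero_of_mem_pow g
  let K : Submodule R J := Submodule.comap J.subtype (I ^ m : Ideal R)
  let i : (J ⧸ K) →ₗ[R] (R ⧸ I ^ m) := K.mapQ (I ^ m : Ideal R) J.subtype le_rfl
  have hi : Function.Injective i := by
    rw [← LinearMap.ker_eq_bot, Submodule.ker_mapQ]
    exact K.mkQ_map_self
  obtain ⟨h, hh⟩ := Module.Injective.out i hi
    (K.liftQ ((I.powerTorsion Q).subtype ∘ₗ g) fun x hx ↦ by simp [hm x hx])
  refine ⟨(h ∘ₗ (Submodule.mkQ (I ^ m : Ideal R))).codRestrict _ fun r ↦ ⟨m, fun a ha ↦ ?_⟩,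
    fun x hx ↦ Subtype.ext (hh (Submodule.Quotient.mk ⟨x, hx⟩))⟩
  have har : (Submodule.Quotient.mk (a • r) : R ⧸ I ^ m) = 0 :=
    (Submodule.Quotient.mk_eq_zero _).2 (Ideal.mul_mem_right _ _ ha)
  rw [← map_smul, LinearMap.comp_apply, Submodule.mkQ_apply, har, map_zero]

theorem powerTorsion_quotient_eq_top {I J : Ideal R} {n : ℕ} (h : I ^ n ≤ J) :
    I.powerTorsion (R ⧸ J) = ⊤ := by
  rw [eq_top_iff]
  rintro x -
  obtain ⟨x, rfl⟩ := Submodule.mkQ_surjective J x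
  refine ⟨n, fun r hr ↦ ?_⟩
  rw [← map_smul]
  exact (Submodule.Quotient.mk_eq_zero _).2 (Ideal.mul_mem_right _ _ (h hr))

end Ideal

namespace ModuleCat

variable {R : Type u} [CommRing R] (I : Ideal R)

/-- The functor of `I`-power torsion. -/
@[simps]
def powerTorsionFunctor : ModuleCat.{v} R ⥤ ModuleCat.{v} R where
  obj M := of R (I.powerTorsion M)
  map f := ofHom (f.hom.restrict fun _ hx ↦ I.map_mem_powerTorsion f.hom hx)

instance : (powerTorsionFunctor.{u, v} I).Additive where

/-- The inclusion of the `I`-power torsion. -/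
@[simps]
def powerTorsionι : powerTorsionFunctor.{u, v} I ⟶ 𝟭 _ where
  app M := ofHom (I.powerTorsion M).subtype

instance (M : ModuleCat.{v} R) : Mono ((powerTorsionι I).app M) :=
  (mono_iff_injective _).2 Subtype.val_injective

variable {I}

theorem exists_comp_powerTorsionι_app_eq {N M : ModuleCat.{v} R} (hN : I.powerTorsion N = ⊤)
    (f : N ⟶ M) : ∃ g, g ≫ (powerTorsionι I).app M = f :=
  ⟨ofHom (f.hom.codRestrict _ fun _ ↦ I.map_mem_powerTorsion f.hom (hN ▸ Submodule.mem_top)), rfl⟩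

theorem injective_powerTorsionFunctor_obj [IsNoetherianRing R] (M : ModuleCat.{u} R) [Injective M] :
    Injective ((powerTorsionFunctor I).obj M) := by
  have : Module.Injective R M := Module.injective_module_of_injective_object R M
  have := I.injective_powerTorsion M
  exact Module.injective_object_of_injective_module R (I.powerTorsion M)

end ModuleCat

namespace CategoryTheory.InjectiveResolution

variable {C : Type u} [Category.{v} C] [Abelian C] [HasExt.{w} C] {R : Type t} [CommRing R]
  [Linear R C] {X Y : C} (I : InjectiveResolution Y)

theorem smul_extMk {n : ℕ} (r : R) (f : X ⟶ I.cocomplex.X n) (m : ℕ) (hm : n + 1 = m)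
    (hf : f ≫ I.cocomplex.d n m = 0) :
    r • I.extMk f m hm hf = I.extMk (r • f) m hm (by simp [hf]) := by
  have h : r • I.extMk f m hm hf =
      (Abelian.Ext.mk₀ (r • 𝟙 X)).comp (I.extMk f m hm hf) (zero_add n) := by
    simp [Abelian.Ext.mk₀_smul]
  rw [h, mk₀_comp_extMk]
  simp

theorem extMk_zero_eq_zero_iff (f : X ⟶ I.cocomplex.X 0) (m : ℕ) (hm : 0 + 1 = m)
    (hf : f ≫ I.cocomplex.d 0 m = 0) : I.extMk f m hm hf = 0 ↔ f = 0 := by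
  refine ⟨fun h ↦ ?_, fun h ↦ by subst h; simp⟩
  rw [← I.extEquivCohomologyClass.apply_eq_iff_eq, extEquivCohomologyClass_extMk,
    extEquivCohomologyClass_zero, CochainComplex.HomComplex.CohomologyClass.mk_eq_zero_iff,
    CochainComplex.HomComplex.Cocycle.fromSingleMk_mem_coboundaries_iff _ _ _ _ _ (-1)
      (by simp)] at h
  obtain ⟨g, hg⟩ := h
  have hX : Limits.IsZero (I.cochainComplex.X (-1)) :=
    CochainComplex.isZero_of_isStrictlyGE _ 0 _
  rw [hX.eq_of_tgt g 0, Limits.zero_comp] at hg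
  rw [← cancel_mono (I.cochainComplexXIso (0 : ℕ) 0 rfl).inv, Limits.zero_comp]
  exact hg.symm

theorem extMk_eq_zero_iff_prev {n : ℕ} (f : X ⟶ I.cocomplex.X n) (m : ℕ) (hm : n + 1 = m)
    (hf : f ≫ I.cocomplex.d n m = 0) :
    I.extMk f m hm hf = 0 ↔
      ∃ g : X ⟶ I.cocomplex.X ((ComplexShape.up ℕ).prev n), g ≫ I.cocomplex.d _ n = f := by
  cases n with
  | zero =>
    rw [extMk_zero_eq_zero_iff]
    refine ⟨fun h ↦ ⟨0, by simp [h]⟩, ?_⟩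
    rintro ⟨g, rfl⟩
    rw [I.cocomplex.shape _ _ (by simp), Limits.comp_zero]
  | succ n => rw [I.extMk_eq_zero_iff f m hm hf n rfl, CochainComplex.prev_nat_succ]

variable {I} {J : CochainComplex C ℕ} (φ : J ⟶ I.cocomplex)

variable (R) (X) in
/-- A morphism from a complex `J` to an injective resolution of `Y` induces a map from cocycles
of `Hom(X, J)` to `Ext`-groups. -/
noncomputable def homCyclesToExt (n : ℕ) : (X ⟶ J.cycles n) →ₗ[R] Abelian.Ext X Y n where
  toFun z := I.extMk (z ≫ J.iCycles n ≫ φ.f n) (n + 1) rfl (by simp)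
  map_add' z z' := by simp [add_extMk]
  map_smul' r z := by simp [smul_extMk]

theorem homCyclesToExt_comp {X' : C} (g : X' ⟶ X) (n : ℕ) (z : X ⟶ J.cycles n) :
    homCyclesToExt R X' φ n (g ≫ z) =
      (Abelian.Ext.mk₀ g).comp (homCyclesToExt R X φ n z) (zero_add n) := by
  simp [homCyclesToExt, mk₀_comp_extMk]

variable [∀ n, Mono (φ.f n)]

theorem homCyclesToExt_surjective (h : ∀ n (f : X ⟶ I.cocomplex.X n), ∃ g, g ≫ φ.f n = f)
    (n : ℕ) : Function.Surjective (homCyclesToExt R X φ n) := by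
  intro x
  obtain ⟨f, hf, rfl⟩ := I.extMk_surjective x (n + 1) rfl
  obtain ⟨g, rfl⟩ := h n f
  have hg : g ≫ J.d n (n + 1) = 0 := by simpa [← cancel_mono (φ.f (n + 1))] using hf
  refine ⟨J.liftCycles g (n + 1) (by simp) hg, ?_⟩
  simp [homCyclesToExt]

theorem homCyclesToExt_eq_zero_iff (h : ∀ n (f : X ⟶ I.cocomplex.X n), ∃ g, g ≫ φ.f n = f)
    (n : ℕ) (z : X ⟶ J.cycles n) : homCyclesToExt R X φ n z = 0 ↔
      ∃ g : X ⟶ J.X ((ComplexShape.up ℕ).prev n), g ≫ J.toCycles _ n = z := by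
  refine (I.extMk_eq_zero_iff_prev _ _ rfl (by simp)).trans ⟨?_, ?_⟩
  · rintro ⟨f, hf⟩
    obtain ⟨g, rfl⟩ := h _ f
    refine ⟨g, ?_⟩
    simpa [← cancel_mono (J.iCycles n), ← cancel_mono (φ.f n)] using hf
  · rintro ⟨g, rfl⟩
    exact ⟨g ≫ φ.f _, by simp⟩

end CategoryTheory.InjectiveResolution

theorem LinearMap.exists_comp_eq_of_surjective {R A B C : Type*} [Ring R]
    [AddCommGroup A] [Module R A] [AddCommGroup B] [Module R B] [AddCommGroup C] [Module R C]
    (f : A →ₗ[R] B) (g : A →ₗ[R] C) (hf : Function.Surjective f)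
    (h : ∀ a, f a = 0 → g a = 0) : ∃ k : B →ₗ[R] C, ∀ a, k (f a) = g a := by
  refine ⟨(LinearMap.ker f).liftQ g h ∘ₗ (f.quotKerEquivOfSurjective hf).symm, fun a ↦ ?_⟩
  have : (f.quotKerEquivOfSurjective hf).symm (f a) = Submodule.Quotient.mk a := by
    rw [LinearEquiv.symm_apply_eq]
    rfl
  rw [LinearMap.comp_apply, LinearEquiv.coe_coe, this]
  rfl

namespace ModuleCat

open Limits

variable {R : Type u} [CommRing R]

theorem isIso_desc_of_isFiltered {K : Type} [SmallCategory K] [IsFiltered K]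
    {F : K ⥤ ModuleCat.{u} R} {c : Cocone F} (hc : IsColimit c) (d : Cocone F)
    (hs : ∀ y : d.pt, ∃ k x, d.ι.app k x = y)
    (hi : ∀ k (x : F.obj k), d.ι.app k x = 0 → ∃ (k' : K) (f : k ⟶ k'), F.map f x = 0) :
    IsIso (hc.desc d) := by
  have : PreservesFilteredColimitsOfSize.{0, 0} (forget (ModuleCat.{u} R)) :=
    preservesFilteredColimitsOfSize_shrink _
  have hd (k : K) (x : F.obj k) : hc.desc d (c.ι.app k x) = d.ι.app k x :=
    congr($(hc.fac d k) x)
  refine (ConcreteCategory.isIso_iff_bijective _).2 ⟨?_, fun y ↦ ?_⟩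
  · refine (injective_iff_map_eq_zero (hc.desc d).hom).2 fun y hy ↦ ?_
    obtain ⟨k, x, rfl⟩ := Concrete.isColimit_exists_rep F hc y
    obtain ⟨k', f, hf⟩ := hi k x ((hd k x).symm.trans hy)
    exact (congr($(c.w f) x)).symm.trans ((congrArg (c.ι.app k') hf).trans (map_zero _))
  · obtain ⟨k, x, rfl⟩ := hs y
    exact ⟨_, hd k x⟩

variable (𝔟 : Ideal R)

/-- The quotient of `R` by a power of `𝔟`. -/
abbrev quotPow (n : ℕ) : ModuleCat.{u} R := .of R (R ⧸ 𝔟 ^ n)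

theorem powerTorsion_quotPow (n : ℕ) : 𝔟.powerTorsion (quotPow 𝔟 n) = ⊤ :=
  Ideal.powerTorsion_quotient_eq_top le_rfl

/-- The projection between the quotients by two powers. -/
abbrev quotPowMap {m n : ℕ} (h : m ≤ n) : quotPow 𝔟 n ⟶ quotPow 𝔟 m :=
  ofHom (Submodule.mapQ _ _ LinearMap.id (Ideal.pow_le_pow_right h))

/-- Morphisms from `R/𝔟ⁿ` are elements killed by `𝔟ⁿ`. -/
theorem exists_hom_quotPow {n : ℕ} {N : ModuleCat.{u} R} (x : N) (hx : ∀ r ∈ 𝔟 ^ n, r • x = 0) :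
    ∃ f : quotPow 𝔟 n ⟶ N, f (Submodule.Quotient.mk 1 : R ⧸ 𝔟 ^ n) = x :=
  ⟨ofHom (Submodule.liftQ _ (LinearMap.toSpanSingleton R N x) hx), one_smul R x⟩

theorem hom_quotPow_ext {n : ℕ} {N : ModuleCat.{u} R} {f g : quotPow 𝔟 n ⟶ N}
    (h : f (Submodule.Quotient.mk 1 : R ⧸ 𝔟 ^ n) = g (Submodule.Quotient.mk 1 : R ⧸ 𝔟 ^ n)) :
    f = g := by
  ext : 1
  refine Submodule.linearMap_qext _ (LinearMap.ext_ring h)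

end ModuleCat

namespace CategoryTheory.InjectiveResolution

open ModuleCat HomologicalComplex

variable {R : Type u} [CommRing R] {M : ModuleCat.{u} R} (I : InjectiveResolution M)
  (𝔟 : Ideal R)

/-- The complex of `𝔟`-power torsion submodules of an injective resolution. -/
noncomputable def powerTorsionComplex : CochainComplex (ModuleCat.{u} R) ℕ :=
  ((powerTorsionFunctor 𝔟).mapHomologicalComplex _).obj I.cocomplex

/-- The inclusion of the complex of `𝔟`-power torsion submodules. -/
noncomputable def powerTorsionComplexι : I.powerTorsionComplex 𝔟 ⟶ I.cocomplex where
  f n := (powerTorsionι 𝔟).app (I.cocomplex.X n)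
  comm' i j _ := ((powerTorsionι 𝔟).naturality (I.cocomplex.d i j)).symm

instance (n : ℕ) : Mono ((I.powerTorsionComplexι 𝔟).f n) :=
  inferInstanceAs (Mono ((powerTorsionι 𝔟).app (I.cocomplex.X n)))

instance [IsNoetherianRing R] (n : ℕ) : Injective ((I.powerTorsionComplex 𝔟).X n) :=
  injective_powerTorsionFunctor_obj (I.cocomplex.X n)

variable {𝔟} in
theorem exists_comp_powerTorsionComplexι_f_eq {N : ModuleCat.{u} R}
    (hN : 𝔟.powerTorsion N = ⊤) (n : ℕ) (f : N ⟶ I.cocomplex.X n) :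
    ∃ g, g ≫ (I.powerTorsionComplexι 𝔟).f n = f :=
  exists_comp_powerTorsionι_app_eq hN f

theorem exists_ext_quotPow_linearMap (n i : ℕ) :
    ∃ f : Abelian.Ext (quotPow 𝔟 n) M i →ₗ[R] (I.powerTorsionComplex 𝔟).homology i,
      ∀ z : quotPow 𝔟 n ⟶ (I.powerTorsionComplex 𝔟).cycles i,
        f (homCyclesToExt R _ (I.powerTorsionComplexι 𝔟) i z) =
          (I.powerTorsionComplex 𝔟).homologyπ i (z (Submodule.Quotient.mk 1 : R ⧸ 𝔟 ^ n)) := by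
  have h := I.exists_comp_powerTorsionComplexι_f_eq (powerTorsion_quotPow 𝔟 n)
  refine LinearMap.exists_comp_eq_of_surjective _
    (((I.powerTorsionComplex 𝔟).homologyπ i).hom ∘ₗ LinearMap.applyₗ
      (Submodule.Quotient.mk 1 : R ⧸ 𝔟 ^ n) ∘ₗ homLinearEquiv.toLinearMap)
    (homCyclesToExt_surjective (I.powerTorsionComplexι 𝔟) h i) fun z hz ↦ ?_
  obtain ⟨g, rfl⟩ := (homCyclesToExt_eq_zero_iff (I.powerTorsionComplexι 𝔟) h i z).1 hz
  exact congr($((I.powerTorsionComplex 𝔟).toCycles_comp_homologyπ _ i)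
    (g (Submodule.Quotient.mk 1 : R ⧸ 𝔟 ^ n)))

/-- The comparison map from `Ext(R/𝔟ⁿ, M)` to the cohomology of the `𝔟`-power torsion of an
injective resolution of `M`. -/
noncomputable def extQuotPowToHomology (n i : ℕ) :
    ((_root_.Ext R (ModuleCat.{u} R) i).obj (.op (quotPow 𝔟 n))).obj M ⟶
      (I.powerTorsionComplex 𝔟).homology i :=
  ofHom ((I.exists_ext_quotPow_linearMap 𝔟 n i).choose ∘ₗ
    (extLinearEquiv R (quotPow 𝔟 n) M i).toLinearMap)

theorem extQuotPowToHomology_apply {n i : ℕ} {x}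
    {z : quotPow 𝔟 n ⟶ (I.powerTorsionComplex 𝔟).cycles i}
    (h : extLinearEquiv R (quotPow 𝔟 n) M i x =
      homCyclesToExt R _ (I.powerTorsionComplexι 𝔟) i z) :
    I.extQuotPowToHomology 𝔟 n i x =
      (I.powerTorsionComplex 𝔟).homologyπ i (z (Submodule.Quotient.mk 1 : R ⧸ 𝔟 ^ n)) :=
  (congrArg _ h).trans ((I.exists_ext_quotPow_linearMap 𝔟 n i).choose_spec z)

theorem exists_extLinearEquiv_eq {n i : ℕ}
    (x : ((_root_.Ext R (ModuleCat.{u} R) i).obj (.op (quotPow 𝔟 n))).obj M) :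
    ∃ z, extLinearEquiv R (quotPow 𝔟 n) M i x =
      homCyclesToExt R _ (I.powerTorsionComplexι 𝔟) i z :=
  (homCyclesToExt_surjective (I.powerTorsionComplexι 𝔟)
    (I.exists_comp_powerTorsionComplexι_f_eq (powerTorsion_quotPow 𝔟 n)) i _).imp fun _ ↦ Eq.symm

variable {𝔟} in
theorem extLinearEquiv_map_eq {m n i : ℕ} (hmn : m ≤ n) {x}
    {z : quotPow 𝔟 m ⟶ (I.powerTorsionComplex 𝔟).cycles i}
    (h : extLinearEquiv R (quotPow 𝔟 m) M i x =
      homCyclesToExt R _ (I.powerTorsionComplexι 𝔟) i z) :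
    extLinearEquiv R (quotPow 𝔟 n) M i
        (((_root_.Ext R (ModuleCat.{u} R) i).map (quotPowMap 𝔟 hmn).op).app M x) =
      homCyclesToExt R _ (I.powerTorsionComplexι 𝔟) i (quotPowMap 𝔟 hmn ≫ z) := by
  rw [homCyclesToExt_comp, ← h]
  exact extLinearEquiv_naturality _ _ _ _

theorem map_comp_extQuotPowToHomology {m n : ℕ} (hmn : m ≤ n) (i : ℕ) :
    ((_root_.Ext R (ModuleCat.{u} R) i).map (quotPowMap 𝔟 hmn).op).app M ≫
      I.extQuotPowToHomology 𝔟 n i = I.extQuotPowToHomology 𝔟 m i := by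
  ext x
  obtain ⟨z, hz⟩ := I.exists_extLinearEquiv_eq 𝔟 x
  exact (I.extQuotPowToHomology_apply 𝔟 (I.extLinearEquiv_map_eq hmn hz)).trans
    (I.extQuotPowToHomology_apply 𝔟 hz).symm

theorem exists_extQuotPowToHomology_eq (i : ℕ) (y : (I.powerTorsionComplex 𝔟).homology i) :
    ∃ n x, I.extQuotPowToHomology 𝔟 n i x = y := by
  obtain ⟨c, rfl⟩ := homologyπ_surjective (I.powerTorsionComplex 𝔟) i y
  obtain ⟨n, hn⟩ := ((I.powerTorsionComplex 𝔟).iCycles i c).2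
  have h (r : R) (hr : r ∈ 𝔟 ^ n) : r • (I.powerTorsionComplex 𝔟).iCycles i c = 0 :=
    Subtype.ext (hn r hr)
  obtain ⟨z, rfl⟩ := exists_hom_quotPow 𝔟 (n := n) c fun r hr ↦
    iCycles_injective _ _ (((map_smul ((I.powerTorsionComplex 𝔟).iCycles i).hom r c).trans
      (h r hr)).trans (map_zero _).symm)
  exact ⟨n, (extLinearEquiv R (quotPow 𝔟 n) M i).symm
    (homCyclesToExt R _ (I.powerTorsionComplexι 𝔟) i z),
    I.extQuotPowToHomology_apply 𝔟 (LinearEquiv.apply_symm_apply _ _)⟩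

theorem exists_map_eq_zero_of_extQuotPowToHomology_eq_zero {n i : ℕ} {x}
    (hx : I.extQuotPowToHomology 𝔟 n i x = 0) : ∃ (m : ℕ) (hnm : n ≤ m),
      ((_root_.Ext R (ModuleCat.{u} R) i).map (quotPowMap 𝔟 hnm).op).app M x = 0 := by
  obtain ⟨z, hz⟩ := I.exists_extLinearEquiv_eq 𝔟 x
  rw [I.extQuotPowToHomology_apply 𝔟 hz, homologyπ_apply_eq_zero_iff _ rfl] at hx
  obtain ⟨w, hw⟩ := hx
  obtain ⟨m, hm⟩ := w.2
  obtain ⟨g, rfl⟩ := exists_hom_quotPow 𝔟 (n := max n m) w fun r hr ↦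
    Subtype.ext (hm r (Ideal.pow_le_pow_right (le_max_right n m) hr))
  refine ⟨_, le_max_left n m, (extLinearEquiv R (quotPow 𝔟 (max n m)) M i).injective ?_⟩
  rw [I.extLinearEquiv_map_eq _ hz, map_zero]
  refine (homCyclesToExt_eq_zero_iff (I.powerTorsionComplexι 𝔟)
    (I.exists_comp_powerTorsionComplexι_f_eq (powerTorsion_quotPow 𝔟 _)) i _).2 ⟨g, ?_⟩
  refine hom_quotPow_ext 𝔟 (iCycles_injective _ _ (Eq.trans ?_ hw))
  exact congr($((I.powerTorsionComplex 𝔟).toCycles_i _ i)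
    (g (Submodule.Quotient.mk 1 : R ⧸ 𝔟 ^ max n m)))

open Opposite localCohomology Limits

/-- The cocone comparing local cohomology with the cohomology of the `𝔟`-power torsion of an
injective resolution. -/
noncomputable def localCohomologyCocone (i : ℕ) :
    Cocone (diagram (idealPowersDiagram 𝔟) i ⋙ (evaluation _ _).obj M) where
  pt := (I.powerTorsionComplex 𝔟).homology i
  ι :=
    { app k := I.extQuotPowToHomology 𝔟 k.unop.unop i
      naturality _ _ f := (I.map_comp_extQuotPowToHomology 𝔟 f.unop.unop.down.down i).trans
        (Category.comp_id _).symm }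

theorem nonempty_localCohomology_obj_iso (i : ℕ) :
    Nonempty ((localCohomology 𝔟 i).obj M ≅ (I.powerTorsionComplex 𝔟).homology i) := by
  have := hasColimitDiagram.{u, 0} (idealPowersDiagram 𝔟) i
  have hc := isColimitOfPreserves ((evaluation _ _).obj M)
    (colimit.isColimit (diagram (idealPowersDiagram 𝔟) i))
  have := isIso_desc_of_isFiltered hc (I.localCohomologyCocone 𝔟 i)
    (fun y ↦ by
      obtain ⟨n, x, hx⟩ := I.exists_extQuotPowToHomology_eq 𝔟 i y
      exact ⟨op (op n), x, hx⟩)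
    (fun k x hx ↦ by
      obtain ⟨m, hm, h⟩ := I.exists_map_eq_zero_of_extQuotPowToHomology_eq_zero 𝔟 hx
      exact ⟨op (op m), (homOfLE hm).op.op, h⟩)
  exact ⟨@asIso _ _ _ _ _ this⟩

end CategoryTheory.InjectiveResolution

/-- `Ext^n(R/𝔞, X)` is invariant under isomorphisms of `X`, and computed by `Abelian.Ext`. -/
noncomputable def extIdealLinearEquiv {R : Type u} [CommRing R] (𝔞 : Ideal R) (n : ℕ)
    {X Y : ModuleCat.{u} R} (e : X ≅ Y) :
    extIdeal 𝔞 n X ≃ₗ[R] Abelian.Ext (ModuleCat.of R (R ⧸ 𝔞)) Y n :=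
  (((_root_.Ext R (ModuleCat.{u} R) n).obj _).mapIso e).toLinearEquiv ≪≫ₗ
    extLinearEquiv R (ModuleCat.of R (R ⧸ 𝔞)) Y n

/-- Yang–Shen, Theorem 4.4 (module case): let `𝔟 ⊆ 𝔞` be ideals of a noetherian ring `R`, `M`
an `R`-module and `s, t ≥ 0` integers such that
(1) `Ext^{s+t-i}_R(R/𝔞, H^i_𝔟(M)) = 0` for `0 ≤ i < t` and for `t+1 ≤ i ≤ s+t`;
(2) `Ext^{s+1+i}_R(R/𝔞, H^{t-i}_𝔟(M)) = 0` for `0 ≤ i ≤ t`;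
(3) `Ext^{s-1-i}_R(R/𝔞, H^{t+i}_𝔟(M)) = 0` for `0 ≤ i ≤ s-1`.
Then `Ext^{s+t}_R(R/𝔞, M) ≅ Ext^s_R(R/𝔞, H^t_𝔟(M))`. -/
theorem ext_isomorphic_ext_localCohomology
    {R : Type u} [CommRing R] [IsNoetherianRing R] (𝔞 𝔟 : Ideal R) (h𝔟𝔞 : 𝔟 ≤ 𝔞)
    (M : ModuleCat.{u} R) (s t : ℕ)
    (h1 : ∀ i : ℕ, (i < t ∨ (t + 1 ≤ i ∧ i ≤ s + t)) →
      Subsingleton (extIdeal 𝔞 (s + t - i) ((localCohomology 𝔟 i).obj M)))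
    (h2 : ∀ i : ℕ, i ≤ t →
      Subsingleton (extIdeal 𝔞 (s + 1 + i) ((localCohomology 𝔟 (t - i)).obj M)))
    (h3 : ∀ i : ℕ, i < s →
      Subsingleton (extIdeal 𝔞 (s - 1 - i) ((localCohomology 𝔟 (t + i)).obj M))) :
    Nonempty ((extIdeal 𝔞 (s + t) M) ≃ₗ[R] (extIdeal 𝔞 s ((localCohomology 𝔟 t).obj M))) := by
  let I := injectiveResolution M
  let N := ModuleCat.of R (R ⧸ 𝔞)
  have e (i : ℕ) : (localCohomology 𝔟 i).obj M ≅ (I.powerTorsionComplex 𝔟).homology i :=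
    (I.nonempty_localCohomology_obj_iso 𝔟 i).some
  have hs {i k : ℕ} (h : Subsingleton (extIdeal 𝔞 k ((localCohomology 𝔟 i).obj M))) :
      Subsingleton (Abelian.Ext N ((I.powerTorsionComplex 𝔟).homology i) k) :=
    (extIdealLinearEquiv 𝔞 k (e i)).symm.subsingleton
  have hN : 𝔟.powerTorsion N = ⊤ :=
    Ideal.powerTorsion_quotient_eq_top (n := 1) ((pow_one 𝔟).trans_le h𝔟𝔞)
  obtain ⟨f, hf, hf'⟩ :=
    (I.powerTorsionComplex 𝔟).exists_hom_cycles_linearMap_ext_homology R N s t (s + t) rfl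
      (fun i k hik hi ↦ by
        obtain rfl : k = s + t - i := by lia
        exact hs (h1 i (by lia)))
      (fun i k hik hi ↦ by
        obtain ⟨j, rfl⟩ := Nat.exists_eq_add_of_le hi
        obtain rfl : k = s + 1 + j := by lia
        have h := h2 j (by lia)
        rw [Nat.add_sub_cancel] at h
        exact hs h)
      (fun i k hik hi ↦ by
        obtain ⟨j, rfl⟩ := Nat.exists_eq_add_of_le hi
        obtain rfl : k = s - 1 - j := by lia
        exact hs (h3 j (by lia)))
  have h := I.exists_comp_powerTorsionComplexι_f_eq hN
  obtain ⟨g, -⟩ := LinearMap.exists_linearEquiv_of_surjective_of_ker_eq _ f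
    (InjectiveResolution.homCyclesToExt_surjective (I.powerTorsionComplexι 𝔟) h (s + t)) hf
    fun z ↦ (InjectiveResolution.homCyclesToExt_eq_zero_iff _ h _ z).trans (hf' z).symm
  exact ⟨extIdealLinearEquiv 𝔞 (s + t) (Iso.refl M) ≪≫ₗ g ≪≫ₗ
    (extIdealLinearEquiv 𝔞 s (e t)).symm⟩
end

section
/- Let R be a commutative Noetherian ring, 𝔞 a proper ideal of R, N a finitely generated 𝔞-torsion R-module, M an R-module, and s ≥ 0, t ≥ 0 integers. Suppose that: (1) Ext^{s+t−i}_R(N, H^i_𝔞(M)) = 0 for all integers i with 0 ≤ i < t or t+1 ≤ i ≤ s+t; (2) Ext^{s+1+i}_R(N, H^{t−i}_𝔞(M)) = 0 for all integers 0 ≤ i ≤ t; (3) Ext^{s−1−i}_R(N, H^{t+i}_𝔞(M)) = 0 for all integers 0 ≤ i ≤ s−1. Then there is an isomorphism of R-modules Ext^{s+t}_R(N, M) ≅ Ext^{s}_R(N, H^{t}_𝔞(M)). -/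
open CategoryTheory

universe u

namespace CochainComplex

variable {R : Type u} [CommRing R] (K L : CochainComplex (ModuleCat.{u} R) ℕ) (n : ℕ)

/-- The inclusion of the concrete kernel of the differential into the object of cycles. -/
noncomputable def kerToCycles :
    ModuleCat.of R (LinearMap.ker (K.d n (n + 1)).hom) ⟶ K.cycles n :=
  K.liftCycles (ModuleCat.ofHom (LinearMap.ker (K.d n (n + 1)).hom).subtype) (n + 1)
    (by simp) (by ext x; exact x.2)

lemma kerToCycles_i :
    kerToCycles K n ≫ K.iCycles n =
      ModuleCat.ofHom (LinearMap.ker (K.d n (n + 1)).hom).subtype := by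
  simp [kerToCycles]

lemma iCycles_injective : Function.Injective (K.iCycles n).hom :=
  (ModuleCat.mono_iff_injective (K.iCycles n)).1 inferInstance

lemma iCycles_kerToCycles_apply (z : LinearMap.ker (K.d n (n + 1)).hom) :
    (K.iCycles n).hom ((kerToCycles K n).hom z) = z :=
  congr($(kerToCycles_i K n).hom z)

/-- The linear map sending a cocycle to its cohomology class. -/
noncomputable def cocycleClass : LinearMap.ker (K.d n (n + 1)).hom →ₗ[R] K.homology n :=
  (kerToCycles K n ≫ K.homologyπ n).hom

lemma cocycleClass_apply (z : LinearMap.ker (K.d n (n + 1)).hom) :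
    cocycleClass K n z = (K.homologyπ n).hom ((kerToCycles K n).hom z) := rfl

lemma cocycleClass_surjective : Function.Surjective (cocycleClass K n) := by
  intro y
  obtain ⟨z, rfl⟩ := (ModuleCat.epi_iff_surjective (K.homologyπ n)).1 inferInstance y
  have hz : (K.d n (n + 1)).hom ((K.iCycles n).hom z) = 0 :=
    congr($(K.iCycles_d n (n + 1)).hom z)
  refine ⟨⟨(K.iCycles n).hom z, hz⟩, ?_⟩
  rw [cocycleClass_apply]
  congr 1
  exact iCycles_injective K n (iCycles_kerToCycles_apply K n _)

lemma cocycleClass_eq_zero_iff (z : LinearMap.ker (K.d n (n + 1)).hom) :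
    cocycleClass K n z = 0 ↔ ∃ y, (K.d ((ComplexShape.up ℕ).prev n) n).hom y = z := by
  have ex := (ShortComplex.moduleCat_exact_iff _).1
    (ShortComplex.exact_of_g_is_cokernel
      (.mk _ _ (K.toCycles_comp_homologyπ ((ComplexShape.up ℕ).prev n) n))
      (K.homologyIsCokernel _ n rfl))
  have key (y) : (K.iCycles n).hom ((K.toCycles ((ComplexShape.up ℕ).prev n) n).hom y) =
      (K.d ((ComplexShape.up ℕ).prev n) n).hom y :=
    congr($(K.toCycles_i ((ComplexShape.up ℕ).prev n) n).hom y)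
  rw [cocycleClass_apply]
  constructor
  · intro h
    obtain ⟨y, hy⟩ := ex _ h
    refine ⟨y, ?_⟩
    rw [← key, ← iCycles_kerToCycles_apply]
    exact congrArg _ hy
  · rintro ⟨y, hy⟩
    have : (kerToCycles K n).hom z = (K.toCycles ((ComplexShape.up ℕ).prev n) n).hom y :=
      iCycles_injective K n (by rw [iCycles_kerToCycles_apply, key, hy])
    rw [this]
    exact congr($(K.toCycles_comp_homologyπ ((ComplexShape.up ℕ).prev n) n).hom y)

variable {K L} in
lemma cocycleClass_map (φ : K ⟶ L)
    (z : LinearMap.ker (K.d n (n + 1)).hom) (w : LinearMap.ker (L.d n (n + 1)).hom)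
    (h : (φ.f n).hom z = w) :
    (HomologicalComplex.homologyMap φ n).hom (cocycleClass K n z) = cocycleClass L n w := by
  have h1 := congr($(HomologicalComplex.homologyπ_naturality φ n).hom ((kerToCycles K n).hom z))
  refine h1.trans ?_
  rw [cocycleClass_apply]
  refine congrArg (L.homologyπ n).hom (iCycles_injective L n ?_)
  rw [iCycles_kerToCycles_apply, ← h]
  refine congr($(HomologicalComplex.cyclesMap_i φ n).hom ((kerToCycles K n).hom z)).trans ?_
  exact congrArg (φ.f n).hom (iCycles_kerToCycles_apply K n z)

end CochainComplex

namespace HomologicalComplex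

open Opposite

lemma homologyUnop_hom_naturality {ι V : Type*} [Category* V] {c : ComplexShape ι}
    [Limits.HasZeroMorphisms V] {K L : HomologicalComplex Vᵒᵖ c} (φ : K ⟶ L) (i : ι)
    [K.HasHomology i] [L.HasHomology i] :
    (L.homologyUnop i).hom ≫ (homologyMap φ i).unop =
      homologyMap ((unopFunctor V c).map φ.op) i ≫ (K.homologyUnop i).hom :=
  Quiver.Hom.op_inj (homologyOp_hom_naturality ((unopFunctor V c).map φ.op) i)

end HomologicalComplex

namespace CategoryTheory.ProjectiveResolution

variable {R : Type u} [CommRing R] {X X' : ModuleCat.{u} R} (P : ProjectiveResolution X)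
  (P' : ProjectiveResolution X') (M : ModuleCat.{u} R) (n : ℕ)

/-- The cocycles of degree `n` of the complex `Hom(P, M)`. -/
noncomputable def homCocycles : Submodule R (P.complex.X n ⟶ M) :=
  LinearMap.ker (Linear.leftComp R M (P.complex.d (n + 1) n))

variable {P M n} in
lemma d_comp_of_mem_homCocycles {z : P.complex.X n ⟶ M} (hz : z ∈ P.homCocycles M n) :
    P.complex.d (n + 1) n ≫ z = 0 := hz

/-- The class in `extObj X M n` of a cocycle. -/
noncomputable def extObjClass : P.homCocycles M n →ₗ[R] extObj X M n :=
  (P.isoExt n M).inv.hom ∘ₗ CochainComplex.cocycleClass (P.complex.linearYonedaObj R M) n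

lemma extObjClass_surjective : Function.Surjective (P.extObjClass M n) :=
  ((P.isoExt (R := R) n M).toLinearEquiv.symm.surjective).comp
    (CochainComplex.cocycleClass_surjective _ _)

lemma extObjClass_eq_zero_iff (z : P.homCocycles M n) :
    P.extObjClass M n z = 0 ↔
      ∃ y, P.complex.d n ((ComplexShape.up ℕ).prev n) ≫ y = z.1 :=
  (P.isoExt (R := R) n M).toLinearEquiv.symm.map_eq_zero_iff.trans
    (CochainComplex.cocycleClass_eq_zero_iff (P.complex.linearYonedaObj R M) n z)

variable {P P'} in
lemma isoExt_inv_naturality {f : X ⟶ X'} (φ : Hom P P' f) :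
    (P'.isoExt n M).inv ≫ ((Ext R (ModuleCat.{u} R) n).map f.op).app M =
      HomologicalComplex.homologyMap ((HomologicalComplex.unopFunctor _ _).map
        ((((linearYoneda R (ModuleCat.{u} R)).obj M).rightOp.mapHomologicalComplex _).map
          φ.hom).op) n ≫ (P.isoExt n M).inv := by
  have h := congr($(isoLeftDerivedObj_hom_naturality f P P' φ.hom
    (by simpa using φ.hom_f_zero_comp_π_f_zero)
    ((linearYoneda R (ModuleCat.{u} R)).obj M).rightOp n).unop)
  have h' := HomologicalComplex.homologyUnop_hom_naturality
    ((((linearYoneda R (ModuleCat.{u} R)).obj M).rightOp.mapHomologicalComplex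
      (ComplexShape.down ℕ)).map φ.hom) n
  let F := ((linearYoneda R (ModuleCat.{u} R)).obj M).rightOp
  let K := (F.mapHomologicalComplex (ComplexShape.down ℕ)).obj P.complex
  let K' := (F.mapHomologicalComplex (ComplexShape.down ℕ)).obj P'.complex
  have e1 := congrArg (fun g => (K'.homologyUnop n).hom ≫ g) h
  have e2 := congrArg (fun g => g ≫ (P.isoLeftDerivedObj F n).hom.unop) h'
  exact (Category.assoc _ _ _).trans (e1.trans ((Category.assoc _ _ _).symm.trans
    (e2.trans (Category.assoc _ _ _))))

variable {P P'} in
/-- The functor `Ext` acts on classes of cocycles by precomposition with a morphism of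
resolutions. -/
lemma extObj_map_class {f : X ⟶ X'} (φ : Hom P P' f) (z : P'.homCocycles M n)
    (w : P.homCocycles M n) (hw : φ.hom.f n ≫ z.1 = w.1) :
    ((((Ext R (ModuleCat.{u} R) n).map f.op).app M).hom (P'.extObjClass M n z) : extObj X M n) =
      P.extObjClass M n w := by
  have h1 := CochainComplex.cocycleClass_map (K := P'.complex.linearYonedaObj R M)
    (L := P.complex.linearYonedaObj R M) n ((HomologicalComplex.unopFunctor _ _).map
        ((((linearYoneda R (ModuleCat.{u} R)).obj M).rightOp.mapHomologicalComplex _).map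
          φ.hom).op) z w hw
  have h2 := congrArg (fun g => ModuleCat.Hom.hom g (CochainComplex.cocycleClass
    (P'.complex.linearYonedaObj R M) n z)) (isoExt_inv_naturality M n φ)
  exact h2.trans (congrArg (P.isoExt n M).inv.hom h1)

/-- The class in `Abelian.Ext X M n` of a cocycle. -/
noncomputable def abelianExtClass : P.homCocycles M n →ₗ[R] Abelian.Ext.{u} X M n where
  toFun z := P.extMk z.1 (n + 1) rfl (d_comp_of_mem_homCocycles z.2)
  map_add' z w := (P.add_extMk _ _ _ _ _ _).symm
  map_smul' r z := by
    rw [RingHom.id_apply, Abelian.Ext.smul_eq_comp_mk₀, extMk_comp_mk₀]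
    simp

lemma abelianExtClass_apply (z : P.homCocycles M n) : P.abelianExtClass M n z =
    P.extMk z.1 (n + 1) rfl (d_comp_of_mem_homCocycles z.2) := rfl

lemma abelianExtClass_surjective : Function.Surjective (P.abelianExtClass M n) := by
  intro x
  obtain ⟨f, hf, rfl⟩ := P.extMk_surjective x (n + 1) rfl
  exact ⟨⟨f, hf⟩, rfl⟩

open CochainComplex.HomComplex in
lemma abelianExtClass_eq_zero_iff (z : P.homCocycles M n) :
    P.abelianExtClass M n z = 0 ↔
      ∃ y, P.complex.d n ((ComplexShape.up ℕ).prev n) ≫ y = z.1 := by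
  rw [abelianExtClass_apply]
  obtain - | n := n
  · rw [← P.extEquivCohomologyClass.apply_eq_iff_eq,
      extEquivCohomologyClass_extMk, extEquivCohomologyClass_zero,
      CohomologyClass.mk_eq_zero_iff, Cocycle.toSingleMk_mem_coboundaries_iff _ _ _ _ _ 1 (by simp)]
    have h0 : P.complex.d 0 ((ComplexShape.up ℕ).prev 0) = 0 := P.complex.shape _ _ (by simp)
    have h1 : P.cochainComplex.d (-((0 : ℕ) : ℤ)) 1 = 0 :=
      (P.cochainComplex.isZero_of_isStrictlyLE 0 1).eq_of_tgt _ _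
    rw [h0]
    simp only [h1, Limits.zero_comp, exists_const,
      ← Iso.inv_comp_eq, Limits.comp_zero]
  · rw [extMk_eq_zero_iff _ _ _ _ _ n rfl]
    rw [CochainComplex.prev_nat_succ]

lemma ker_abelianExtClass : LinearMap.ker (P.abelianExtClass M n) =
    LinearMap.ker (P.extObjClass M n) := by
  ext z
  simp only [LinearMap.mem_ker, abelianExtClass_eq_zero_iff, extObjClass_eq_zero_iff]

/-- The linear equivalence between `Abelian.Ext` and the functor `Ext`. -/
noncomputable def abelianExtEquivExtObj : Abelian.Ext.{u} X M n ≃ₗ[R] extObj X M n :=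
  ((P.abelianExtClass M n).quotKerEquivOfSurjective (P.abelianExtClass_surjective M n)).symm ≪≫ₗ
    Submodule.quotEquivOfEq _ _ (P.ker_abelianExtClass M n) ≪≫ₗ
    (P.extObjClass M n).quotKerEquivOfSurjective (P.extObjClass_surjective M n)

lemma abelianExtEquivExtObj_class (z : P.homCocycles M n) :
    P.abelianExtEquivExtObj M n (P.abelianExtClass M n z) = P.extObjClass M n z := by
  have : ((P.abelianExtClass M n).quotKerEquivOfSurjective
      (P.abelianExtClass_surjective M n)).symm (P.abelianExtClass M n z) =
        Submodule.Quotient.mk z := by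
    rw [LinearEquiv.symm_apply_eq]; rfl
  simp only [abelianExtEquivExtObj, LinearEquiv.trans_apply, this]
  rfl

variable {P P'} in
lemma abelianExtEquivExtObj_naturality {f : X ⟶ X'} (φ : Hom P P' f)
    (x : Abelian.Ext.{u} X' M n) :
    P.abelianExtEquivExtObj M n ((Abelian.Ext.mk₀ f).comp x (zero_add n)) =
      (((Ext R (ModuleCat.{u} R) n).map f.op).app M).hom (P'.abelianExtEquivExtObj M n x) := by
  obtain ⟨z, rfl⟩ := P'.abelianExtClass_surjective M n x
  have hw : φ.hom.f n ≫ z.1 ∈ P.homCocycles M n := by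
    change P.complex.d (n + 1) n ≫ φ.hom.f n ≫ z.1 = 0
    rw [← φ.hom.comm_assoc, d_comp_of_mem_homCocycles z.2, Limits.comp_zero]
  rw [abelianExtEquivExtObj_class, extObj_map_class M n φ z ⟨_, hw⟩ rfl,
    ← abelianExtEquivExtObj_class, abelianExtClass_apply, abelianExtClass_apply,
    mk₀_comp_extMk _ _ _ _ φ]

end CategoryTheory.ProjectiveResolution

section

variable {R : Type u} [CommRing R]

/-- The comparison between `Abelian.Ext` and the functor `Ext` in the category of modules. -/
noncomputable def extEquiv (X M : ModuleCat.{u} R) (n : ℕ) :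
    Abelian.Ext.{u} X M n ≃ₗ[R] extObj X M n :=
  (projectiveResolution X).abelianExtEquivExtObj M n

lemma extEquiv_naturality {X X' : ModuleCat.{u} R} (f : X ⟶ X') (M : ModuleCat.{u} R) (n : ℕ)
    (x : Abelian.Ext.{u} X' M n) :
    extEquiv X M n ((Abelian.Ext.mk₀ f).comp x (zero_add n)) =
      (((Ext R (ModuleCat.{u} R) n).map f.op).app M).hom (extEquiv X' M n x) :=
  ProjectiveResolution.abelianExtEquivExtObj_naturality (P := projectiveResolution X)
    (P' := projectiveResolution X') M n
    ⟨ProjectiveResolution.lift f _ _,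
      by simpa using ProjectiveResolution.lift_commutes_zero f _ _⟩ x

end

section

variable {R : Type u} [CommRing R] (𝔞 : Ideal R)

/-- The module `R ⧸ 𝔞 ^ k`. -/
abbrev powQuot (k : ℕ) : ModuleCat.{u} R := ModuleCat.of R (R ⧸ 𝔞 ^ k)

/-- The projection `R ⧸ 𝔞 ^ l ⟶ R ⧸ 𝔞 ^ k` for `k ≤ l`. -/
def powQuotMap {k l : ℕ} (h : k ≤ l) : powQuot 𝔞 l ⟶ powQuot 𝔞 k :=
  ModuleCat.ofHom (Submodule.mapQ _ _ LinearMap.id (Ideal.pow_le_pow_right h))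

lemma powQuotMap_refl (k : ℕ) : powQuotMap 𝔞 (le_refl k) = 𝟙 _ := by
  ext
  rfl

lemma powQuotMap_comp {k l m : ℕ} (h : k ≤ l) (h' : l ≤ m) :
    powQuotMap 𝔞 h' ≫ powQuotMap 𝔞 h = powQuotMap 𝔞 (h.trans h') := by
  ext
  rfl

/-- The transition map `Ext (R ⧸ 𝔞 ^ k) M i → Ext (R ⧸ 𝔞 ^ l) M i` for `k ≤ l`. -/
noncomputable def extPowMap (M : ModuleCat.{u} R) (i : ℕ) {k l : ℕ} (h : k ≤ l) :
    Abelian.Ext.{u} (powQuot 𝔞 k) M i →ₗ[R] Abelian.Ext.{u} (powQuot 𝔞 l) M i :=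
  Abelian.Ext.precompOfLinear (Abelian.Ext.mk₀ (powQuotMap 𝔞 h)) R M (zero_add i)

lemma extPowMap_apply (M : ModuleCat.{u} R) (i : ℕ) {k l : ℕ} (h : k ≤ l)
    (x : Abelian.Ext.{u} (powQuot 𝔞 k) M i) :
    extPowMap 𝔞 M i h x = (Abelian.Ext.mk₀ (powQuotMap 𝔞 h)).comp x (zero_add i) := rfl

lemma extPowMap_refl (M : ModuleCat.{u} R) (i k : ℕ) (x : Abelian.Ext.{u} (powQuot 𝔞 k) M i) :
    extPowMap 𝔞 M i (le_refl k) x = x := by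
  rw [extPowMap_apply, powQuotMap_refl, Abelian.Ext.mk₀_id_comp]

lemma extPowMap_extPowMap (M : ModuleCat.{u} R) (i : ℕ) {k l m : ℕ} (h : k ≤ l) (h' : l ≤ m)
    (x : Abelian.Ext.{u} (powQuot 𝔞 k) M i) :
    extPowMap 𝔞 M i h' (extPowMap 𝔞 M i h x) = extPowMap 𝔞 M i (h.trans h') x := by
  simp only [extPowMap_apply, ← powQuotMap_comp 𝔞 h h', ← Abelian.Ext.mk₀_comp_mk₀_assoc]

lemma extPowMap_comp {M M' : ModuleCat.{u} R} {i j n : ℕ} {k l : ℕ} (h : k ≤ l)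
    (x : Abelian.Ext.{u} (powQuot 𝔞 k) M i) (y : Abelian.Ext.{u} M M' j) (hn : i + j = n) :
    extPowMap 𝔞 M' n h (x.comp y hn) = (extPowMap 𝔞 M i h x).comp y hn := by
  simp only [extPowMap_apply]
  rw [Abelian.Ext.comp_assoc _ _ _ (zero_add i) hn (by lia)]

instance (M : ModuleCat.{u} R) (i : ℕ) :
    DirectedSystem (fun k ↦ Abelian.Ext.{u} (powQuot 𝔞 k) M i)
      (fun _ _ h ↦ extPowMap 𝔞 M i h) where
  map_self k x := extPowMap_refl 𝔞 M i k x
  map_map _ _ _ _ _ x := extPowMap_extPowMap 𝔞 M i _ _ x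

/-- The property that the module `L` is the direct limit of the modules
`Ext (R ⧸ 𝔞 ^ k) M i`. -/
def IsLocalCohomology (i : ℕ) (M : ModuleCat.{u} R) (L : Type u) [AddCommGroup L] [Module R L] :
    Prop :=
  ∃ φ : ∀ k, Abelian.Ext.{u} (powQuot 𝔞 k) M i →ₗ[R] L,
    (∀ k l (h : k ≤ l) x, φ l (extPowMap 𝔞 M i h x) = φ k x) ∧
    (∀ y, ∃ k x, φ k x = y) ∧
    ∀ k x, φ k x = 0 → ∃ l, ∃ h : k ≤ l, extPowMap 𝔞 M i h x = 0

lemma isLocalCohomology_localCohomology (i : ℕ) (M : ModuleCat.{u} R) :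
    IsLocalCohomology 𝔞 i M ((localCohomology 𝔞 i).obj M) := by
  let D := localCohomology.diagram (localCohomology.idealPowersDiagram 𝔞) i
  let F := D ⋙ (evaluation _ _).obj M
  let c : Limits.Cocone F :=
    ((evaluation _ (ModuleCat.{u} R)).obj M).mapCocone (Limits.colimit.cocone D)
  have hc : Limits.IsColimit c := Limits.isColimitOfPreserves _ (Limits.colimit.isColimit D)
  have : Limits.PreservesFilteredColimitsOfSize.{0, 0} (forget (ModuleCat.{u} R)) :=
    Limits.preservesFilteredColimitsOfSize_shrink.{0, u, 0, u} _
  have hmap {k l : ℕ} (h : k ≤ l) (x : Abelian.Ext.{u} (powQuot 𝔞 k) M i) :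
      extEquiv _ M i (extPowMap 𝔞 M i h x) =
        (F.map (homOfLE h).op.op).hom (extEquiv _ M i x) :=
    extEquiv_naturality (powQuotMap 𝔞 h) M i x
  refine ⟨fun k ↦ (c.ι.app (.op (.op k))).hom ∘ₗ (extEquiv _ M i).toLinearMap, ?_, ?_, ?_⟩
  · intro k l h x
    refine (congrArg (c.ι.app (.op (.op l))).hom (hmap h x)).trans ?_
    exact congr($(c.w (homOfLE h).op.op).hom (extEquiv _ M i x))
  · intro y
    obtain ⟨j, y, hy⟩ := Limits.Concrete.isColimit_exists_rep F hc y
    refine ⟨j.unop.unop, (extEquiv _ M i).symm y, ?_⟩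
    refine Eq.trans ?_ hy
    exact congrArg (c.ι.app j).hom ((extEquiv _ M i).apply_symm_apply y)
  · intro k x hx
    have hx' : (c.ι.app (.op (.op k))).hom (extEquiv _ M i x) =
      (c.ι.app (.op (.op k))).hom 0 := hx.trans (map_zero _).symm
    obtain ⟨j, f, hf⟩ := (hc.eq_iff' _ _).1 hx'
    refine ⟨j.unop.unop, leOfHom f.unop.unop, (extEquiv _ M i).injective ?_⟩
    rw [hmap, map_zero]
    exact hf.trans (map_zero _)

variable {𝔞}

namespace IsLocalCohomology

lemma nonempty_directLimit_equiv {i : ℕ} {M : ModuleCat.{u} R} {L : Type u} [AddCommGroup L]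
    [Module R L] (h : IsLocalCohomology 𝔞 i M L) :
    Nonempty (Module.DirectLimit (fun k ↦ Abelian.Ext.{u} (powQuot 𝔞 k) M i)
      (fun _ _ h ↦ extPowMap 𝔞 M i h) ≃ₗ[R] L) := by
  obtain ⟨φ, hφ, hs, hi⟩ := h
  refine ⟨.ofBijective (Module.DirectLimit.lift R ℕ _ _ φ hφ) ⟨?_, ?_⟩⟩
  · rw [injective_iff_map_eq_zero]
    intro x hx
    obtain ⟨k, x, rfl⟩ := Module.DirectLimit.exists_of x
    rw [Module.DirectLimit.lift_of] at hx
    obtain ⟨l, hl, h⟩ := hi k x hx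
    rw [← Module.DirectLimit.of_f (hij := hl), h, map_zero]
  · intro y
    obtain ⟨k, x, rfl⟩ := hs y
    exact ⟨Module.DirectLimit.of R ℕ _ _ k x, Module.DirectLimit.lift_of _ _ _⟩

lemma nonempty_equiv {i : ℕ} {M : ModuleCat.{u} R} {L L' : Type u} [AddCommGroup L]
    [Module R L] [AddCommGroup L'] [Module R L'] (h : IsLocalCohomology 𝔞 i M L)
    (h' : IsLocalCohomology 𝔞 i M L') : Nonempty (L ≃ₗ[R] L') := by
  obtain ⟨e⟩ := h.nonempty_directLimit_equiv
  obtain ⟨f⟩ := h'.nonempty_directLimit_equiv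
  exact ⟨e.symm ≪≫ₗ f⟩

/-- Local cohomology is transported along a morphism of direct systems which is eventually
injective and eventually surjective. -/
lemma of_map {i i' : ℕ} {M M' : ModuleCat.{u} R} {L : Type u} [AddCommGroup L] [Module R L]
    (h : IsLocalCohomology 𝔞 i' M' L)
    (f : ∀ k, Abelian.Ext.{u} (powQuot 𝔞 k) M i →ₗ[R] Abelian.Ext.{u} (powQuot 𝔞 k) M' i')
    (hf : ∀ k l (h : k ≤ l) x, f l (extPowMap 𝔞 M i h x) = extPowMap 𝔞 M' i' h (f k x))
    (inj : ∀ k x, f k x = 0 → ∃ l, ∃ h : k ≤ l, extPowMap 𝔞 M i h x = 0)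
    (surj : ∀ k y, ∃ l, ∃ h : k ≤ l, ∃ x, f l x = extPowMap 𝔞 M' i' h y) :
    IsLocalCohomology 𝔞 i M L := by
  obtain ⟨φ, hφ, hs, hi⟩ := h
  refine ⟨fun k ↦ φ k ∘ₗ f k, ?_, ?_, ?_⟩
  · intro k l h x
    simp only [LinearMap.comp_apply, hf, hφ]
  · intro y
    obtain ⟨k, y, rfl⟩ := hs y
    obtain ⟨l, h, x, hx⟩ := surj k y
    exact ⟨l, x, by rw [LinearMap.comp_apply, hx, hφ]⟩
  · intro k x hx
    obtain ⟨l, h, hl⟩ := hi k _ hx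
    rw [← hf] at hl
    obtain ⟨m, h', hm⟩ := inj _ _ hl
    exact ⟨m, h.trans h', by rw [← hm, extPowMap_extPowMap]⟩

end IsLocalCohomology

end

section

variable {R : Type u} [CommRing R] (𝔞 : Ideal R)

/-- The `𝔞`-torsion submodule: the elements annihilated by some power of `𝔞`. -/
def powTorsion (M : Type u) [AddCommGroup M] [Module R M] : Submodule R M where
  carrier := {m | ∃ n : ℕ, ∀ a ∈ 𝔞 ^ n, a • m = 0}
  zero_mem' := ⟨0, fun a _ ↦ smul_zero a⟩
  add_mem' := by
    rintro x y ⟨n, hn⟩ ⟨m, hm⟩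
    refine ⟨max n m, fun a ha ↦ ?_⟩
    rw [smul_add, hn a (Ideal.pow_le_pow_right (le_max_left _ _) ha),
      hm a (Ideal.pow_le_pow_right (le_max_right _ _) ha), add_zero]
  smul_mem' := by
    rintro r x ⟨n, hn⟩
    exact ⟨n, fun a ha ↦ by rw [smul_comm, hn a ha, smul_zero]⟩

variable {𝔞}

lemma map_mem_powTorsion {M M' : Type u} [AddCommGroup M] [Module R M] [AddCommGroup M']
    [Module R M'] (f : M →ₗ[R] M') {m : M} (h : m ∈ powTorsion 𝔞 M) : f m ∈ powTorsion 𝔞 M' := by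
  obtain ⟨n, hn⟩ := h
  exact ⟨n, fun a ha ↦ by rw [← map_smul, hn a ha, map_zero]⟩

lemma map_mem_powTorsion_iff {M M' : Type u} [AddCommGroup M] [Module R M] [AddCommGroup M']
    [Module R M'] (f : M →ₗ[R] M') (hf : Function.Injective f) {m : M} :
    f m ∈ powTorsion 𝔞 M' ↔ m ∈ powTorsion 𝔞 M := by
  refine ⟨fun ⟨n, hn⟩ ↦ ⟨n, fun a ha ↦ hf ?_⟩, map_mem_powTorsion f⟩
  rw [map_smul, hn a ha, map_zero]

lemma isTorsionIdeal_powTorsion (M : Type u) [AddCommGroup M] [Module R M] :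
    IsTorsionIdeal 𝔞 (powTorsion 𝔞 M) := fun m ↦ by
  obtain ⟨n, hn⟩ := m.2
  exact ⟨n, fun a ha ↦ Subtype.ext (hn a ha)⟩

lemma IsTorsionIdeal.mem_powTorsion {M : Type u} [AddCommGroup M] [Module R M]
    (h : IsTorsionIdeal 𝔞 M) (m : M) : m ∈ powTorsion 𝔞 M := h m

lemma IsTorsionIdeal.of_surjective {M M' : Type u} [AddCommGroup M] [Module R M] [AddCommGroup M']
    [Module R M'] (h : IsTorsionIdeal 𝔞 M) (f : M →ₗ[R] M') (hf : Function.Surjective f) :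
    IsTorsionIdeal 𝔞 M' := fun m ↦ by
  obtain ⟨m, rfl⟩ := hf m
  exact map_mem_powTorsion f (h m)

lemma IsTorsionIdeal.quotient_pow (k : ℕ) : IsTorsionIdeal 𝔞 (R ⧸ 𝔞 ^ k) := fun m ↦ by
  obtain ⟨m, rfl⟩ := Ideal.Quotient.mk_surjective m
  exact ⟨k, fun a ha ↦ Ideal.Quotient.eq_zero_iff_mem.2 (Ideal.mul_mem_right m _ ha)⟩

lemma exists_pow_smul_eq_zero_of_fg {M : Type u} [AddCommGroup M] [Module R M]
    {P : Submodule R M} (hP : P.FG) :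
    P ≤ powTorsion 𝔞 M → ∃ n : ℕ, ∀ a ∈ 𝔞 ^ n, ∀ p ∈ P, a • p = 0 := by
  induction P, hP using Submodule.fg_induction with
  | singleton x =>
    intro h
    obtain ⟨n, hn⟩ := h (Submodule.mem_span_singleton_self x)
    refine ⟨n, fun a ha p hp ↦ ?_⟩
    obtain ⟨r, rfl⟩ := Submodule.mem_span_singleton.1 hp
    rw [smul_comm, hn a ha, smul_zero]
  | sup P₁ P₂ _ _ ih₁ ih₂ =>
    intro h
    obtain ⟨n, hn⟩ := ih₁ (le_sup_left.trans h)
    obtain ⟨m, hm⟩ := ih₂ (le_sup_right.trans h)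
    refine ⟨max n m, fun a ha p hp ↦ ?_⟩
    obtain ⟨x, hx, y, hy, rfl⟩ := Submodule.mem_sup.1 hp
    rw [smul_add, hn a (Ideal.pow_le_pow_right (le_max_left _ _) ha) x hx,
      hm a (Ideal.pow_le_pow_right (le_max_right _ _) ha) y hy, add_zero]

lemma powTorsion_quotient_powTorsion [IsNoetherianRing R] (M : Type u) [AddCommGroup M]
    [Module R M] : powTorsion 𝔞 (M ⧸ powTorsion 𝔞 M) = ⊥ := by
  rw [eq_bot_iff]
  intro x hx
  obtain ⟨m, rfl⟩ := Submodule.mkQ_surjective _ x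
  obtain ⟨n, hn⟩ := hx
  obtain ⟨k, hk⟩ := exists_pow_smul_eq_zero_of_fg (𝔞 := 𝔞)
    (P := Submodule.map (LinearMap.toSpanSingleton R M m) (𝔞 ^ n))
    (Submodule.FG.map _ ((isNoetherianRing_iff_ideal_fg R).1 inferInstance (𝔞 ^ n))) (by
      rintro _ ⟨a, ha, rfl⟩
      rw [← Submodule.ker_mkQ (powTorsion 𝔞 M), LinearMap.mem_ker]
      simpa using hn a ha)
  refine (Submodule.Quotient.mk_eq_zero _).2 ⟨k + n, fun a ha ↦ ?_⟩
  rw [pow_add] at ha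
  induction ha using Submodule.mul_induction_on' with
  | mem_mul_mem a ha b hb =>
    rw [mul_smul]
    exact hk a ha _ ⟨b, hb, rfl⟩
  | add a _ b _ iha ihb => rw [add_smul, iha, ihb, add_zero]

lemma injective_powTorsion [IsNoetherianRing R] (I : Type u) [AddCommGroup I] [Module R I]
    [Module.Injective R I] : Module.Injective R (powTorsion 𝔞 I) := by
  refine Module.Baer.injective fun J g ↦ ?_
  obtain ⟨n, hn⟩ := exists_pow_smul_eq_zero_of_fg (𝔞 := 𝔞) (P := LinearMap.range g)
    (Module.Finite.iff_fg.1 inferInstance)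
    (fun x _ ↦ (isTorsionIdeal_powTorsion I).mem_powTorsion x)
  obtain ⟨k, hk⟩ := 𝔞.exists_pow_inf_eq_pow_smul J
  let f : (J ⧸ Submodule.comap J.subtype (𝔞 ^ (k + n))) →ₗ[R] R ⧸ 𝔞 ^ (k + n) :=
    Submodule.mapQ _ _ J.subtype le_rfl
  have hf : Function.Injective f := by
    rw [← LinearMap.ker_eq_bot]
    exact Submodule.ker_liftQ_eq_bot _ _ _ (by
      rw [LinearMap.ker_comp, Submodule.ker_mkQ])
  have hg : Submodule.comap J.subtype (𝔞 ^ (k + n)) ≤ LinearMap.ker g := by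
    rintro ⟨x, hx⟩ hxa
    have h1 : x ∈ 𝔞 ^ (k + n) • (⊤ : Ideal R) ⊓ J := ⟨by simpa using hxa, hx⟩
    rw [hk _ (Nat.le_add_right k n), Nat.add_sub_cancel_left] at h1
    have h2 : x ∈ 𝔞 ^ n • J :=
      (show 𝔞 ^ n • (𝔞 ^ k • (⊤ : Ideal R) ⊓ J) ≤ 𝔞 ^ n • J from smul_mono_right _ inf_le_right) h1
    rw [LinearMap.mem_ker]
    have h3 : ∀ y ∈ 𝔞 ^ n • J, ∀ hy : y ∈ J, g ⟨y, hy⟩ = 0 := by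
      intro y hy
      induction hy using Submodule.smul_induction_on' with
      | smul a ha z hz =>
        intro _
        exact (g.map_smul a ⟨z, hz⟩).trans (hn a ha _ ⟨⟨z, hz⟩, rfl⟩)
      | add y₁ h₁ y₂ h₂ ih₁ ih₂ =>
        intro _
        exact (g.map_add ⟨y₁, Submodule.smul_le_right h₁⟩ ⟨y₂, Submodule.smul_le_right h₂⟩).trans
          (by rw [ih₁, ih₂, add_zero])
    exact h3 x h2 hx
  obtain ⟨h, hh⟩ := Module.Injective.out f hf ((powTorsion 𝔞 I).subtype ∘ₗ Submodule.liftQ _ g hg)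
  refine ⟨(h ∘ₗ Submodule.mkQ _).codRestrict _ fun x ↦
    map_mem_powTorsion h (IsTorsionIdeal.quotient_pow (k + n) _), fun x hx ↦ Subtype.ext ?_⟩
  exact hh (Submodule.Quotient.mk ⟨x, hx⟩)

variable (𝔞) in
/-- The short complex `0 → Γ M → M → M ⧸ Γ M → 0`, where `Γ M` is the `𝔞`-torsion submodule. -/
noncomputable abbrev powTorsionShortComplex (M : ModuleCat.{u} R) :
    ShortComplex (ModuleCat.{u} R) :=
  ModuleCat.shortComplexOfCompEqZero (powTorsion 𝔞 M).subtype (powTorsion 𝔞 M).mkQ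
    (by ext x; simp)

lemma shortExact_powTorsionShortComplex (M : ModuleCat.{u} R) :
    (powTorsionShortComplex 𝔞 M).ShortExact :=
  ModuleCat.shortComplex_shortExact _ (LinearMap.exact_subtype_mkQ _)
    (Submodule.subtype_injective _) (Submodule.mkQ_surjective _)

lemma injective_quotient_powTorsion [IsNoetherianRing R] (I : ModuleCat.{u} R) [Injective I] :
    Injective (ModuleCat.of R (I ⧸ powTorsion 𝔞 I)) := by
  have : Module.Injective R I := Module.injective_module_of_injective_object R I
  have := injective_powTorsion (𝔞 := 𝔞) I
  have : Injective (powTorsionShortComplex 𝔞 I).X₁ :=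
    Module.injective_object_of_injective_module R (powTorsion 𝔞 I)
  let σ := (shortExact_powTorsionShortComplex (𝔞 := 𝔞) I).splittingOfInjective
  exact Retract.injective (Y := I) ⟨σ.s, (powTorsionShortComplex 𝔞 I).g, σ.s_g⟩

/-- The quotient of a module by its `𝔞`-torsion submodule embeds in an injective module without
`𝔞`-torsion. -/
lemma exists_shortExact_quotient_powTorsion [IsNoetherianRing R] (M : ModuleCat.{u} R) :
    ∃ (I M' : ModuleCat.{u} R) (f : ModuleCat.of R (M ⧸ powTorsion 𝔞 M) ⟶ I) (g : I ⟶ M')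
      (w : f ≫ g = 0), (ShortComplex.mk f g w).ShortExact ∧ Injective I ∧
        powTorsion 𝔞 I = ⊥ := by
  let E := Injective.under M
  let j : M ⟶ E := Injective.ι M
  have hj : Function.Injective j.hom := (ModuleCat.mono_iff_injective j).1 inferInstance
  let f : (M ⧸ powTorsion 𝔞 M) →ₗ[R] E ⧸ powTorsion 𝔞 E :=
    Submodule.mapQ _ _ j.hom fun x hx ↦ map_mem_powTorsion j.hom hx
  have hf : Function.Injective f := by
    rw [← LinearMap.ker_eq_bot]
    refine Submodule.ker_liftQ_eq_bot _ _ _ fun x hx ↦ ?_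
    rw [LinearMap.ker_comp, Submodule.ker_mkQ] at hx
    exact (map_mem_powTorsion_iff j.hom hj).1 hx
  refine ⟨ModuleCat.of R (E ⧸ powTorsion 𝔞 E), _, ModuleCat.ofHom f,
    ModuleCat.ofHom (LinearMap.range f).mkQ, by ext; simp,
    ModuleCat.shortComplex_shortExact _ (LinearMap.exact_map_mkQ_range f) hf
      (Submodule.mkQ_surjective _), injective_quotient_powTorsion E,
      powTorsion_quotient_powTorsion E⟩

/-- A torsion module embeds in an injective torsion module, with torsion cokernel. -/
lemma IsTorsionIdeal.exists_shortExact [IsNoetherianRing R] {T : ModuleCat.{u} R}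
    (hT : IsTorsionIdeal 𝔞 T) :
    ∃ (J T' : ModuleCat.{u} R) (f : T ⟶ J) (g : J ⟶ T') (w : f ≫ g = 0),
      (ShortComplex.mk f g w).ShortExact ∧ Injective J ∧ IsTorsionIdeal 𝔞 J ∧
        IsTorsionIdeal 𝔞 T' := by
  let E := Injective.under T
  let j : T ⟶ E := Injective.ι T
  have hj : Function.Injective j.hom := (ModuleCat.mono_iff_injective j).1 inferInstance
  have : Injective (ModuleCat.of R E) := inferInstanceAs (Injective E)
  have : Module.Injective R E := Module.injective_module_of_injective_object R E
  have := injective_powTorsion (𝔞 := 𝔞) E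
  let f : T →ₗ[R] powTorsion 𝔞 E := j.hom.codRestrict _ fun x ↦ map_mem_powTorsion j.hom (hT x)
  have hf : Function.Injective f := fun x y h ↦ hj congr($h)
  exact ⟨ModuleCat.of R (powTorsion 𝔞 E), _, ModuleCat.ofHom f,
    ModuleCat.ofHom (LinearMap.range f).mkQ, by ext; simp,
    ModuleCat.shortComplex_shortExact _ (LinearMap.exact_map_mkQ_range f) hf
      (Submodule.mkQ_surjective _),
      Module.injective_object_of_injective_module R (powTorsion 𝔞 E),
      isTorsionIdeal_powTorsion E,
      (isTorsionIdeal_powTorsion E).of_surjective _ (Submodule.mkQ_surjective _)⟩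

end

section

variable {R : Type u} [CommRing R] {𝔞 : Ideal R} (N : ModuleCat.{u} R)

/-- The map `Ext N M n → Ext N M' n` induced by a morphism `M ⟶ M'`. -/
noncomputable def extMap {M M' : ModuleCat.{u} R} (f : M ⟶ M') (n : ℕ) :
    Abelian.Ext.{u} N M n →ₗ[R] Abelian.Ext.{u} N M' n :=
  Abelian.Ext.postcompOfLinear (Abelian.Ext.mk₀ f) R N (add_zero n)

lemma extMap_apply {M M' : ModuleCat.{u} R} (f : M ⟶ M') (n : ℕ) (x : Abelian.Ext.{u} N M n) :
    extMap N f n x = x.comp (Abelian.Ext.mk₀ f) (add_zero n) := rfl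

/-- The isomorphism `Ext N M n ≃ Ext N M' n` induced by a linear equivalence. -/
noncomputable def extCongr {M M' : ModuleCat.{u} R} (e : M ≃ₗ[R] M') (n : ℕ) :
    Abelian.Ext.{u} N M n ≃ₗ[R] Abelian.Ext.{u} N M' n :=
  .ofLinearMap (extMap N e.toModuleIso.hom n) (extMap N e.toModuleIso.inv n)
    (by
      ext x
      simp only [LinearMap.comp_apply, LinearMap.id_apply, extMap_apply,
        Abelian.Ext.comp_assoc_of_third_deg_zero, Abelian.Ext.mk₀_comp_mk₀, Iso.inv_hom_id,
        Abelian.Ext.comp_mk₀_id])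
    (by
      ext x
      simp only [LinearMap.comp_apply, LinearMap.id_apply, extMap_apply,
        Abelian.Ext.comp_assoc_of_third_deg_zero, Abelian.Ext.mk₀_comp_mk₀, Iso.hom_inv_id,
        Abelian.Ext.comp_mk₀_id])

section LongExactSequence

variable {N} {S : ShortComplex (ModuleCat.{u} R)} (hS : S.ShortExact)

/-- The connecting map of the covariant long exact sequence. -/
noncomputable def extConnecting (N : ModuleCat.{u} R) (n : ℕ) :
    Abelian.Ext.{u} N S.X₃ n →ₗ[R] Abelian.Ext.{u} N S.X₁ (n + 1) :=
  Abelian.Ext.postcompOfLinear hS.extClass R N rfl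

lemma extConnecting_apply {n : ℕ} (x : Abelian.Ext.{u} N S.X₃ n) :
    extConnecting hS N n x = x.comp hS.extClass rfl := rfl

include hS

lemma exists_extMap_f_eq {n : ℕ} {x : Abelian.Ext.{u} N S.X₂ n} (h : extMap N S.g n x = 0) :
    ∃ y, extMap N S.f n y = x :=
  Abelian.Ext.covariant_sequence_exact₂ N hS x h

lemma exists_extMap_g_eq {n : ℕ} {x : Abelian.Ext.{u} N S.X₃ n}
    (h : extConnecting hS N n x = 0) : ∃ y, extMap N S.g n y = x :=
  Abelian.Ext.covariant_sequence_exact₃ N hS x rfl h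

lemma exists_extConnecting_eq {n : ℕ} {x : Abelian.Ext.{u} N S.X₁ (n + 1)}
    (h : extMap N S.f (n + 1) x = 0) : ∃ y, extConnecting hS N n y = x :=
  Abelian.Ext.covariant_sequence_exact₁ N hS x h rfl

lemma extConnecting_extMap {n : ℕ} (x : Abelian.Ext.{u} N S.X₂ n) :
    extConnecting hS N n (extMap N S.g n x) = 0 := by
  rw [extMap_apply, extConnecting_apply, Abelian.Ext.comp_assoc_of_second_deg_zero,
    hS.comp_extClass, Abelian.Ext.comp_zero]

lemma subsingleton_ext_of_shortExact {n : ℕ} (h₁ : Subsingleton (Abelian.Ext.{u} N S.X₁ n))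
    (h₃ : Subsingleton (Abelian.Ext.{u} N S.X₃ n)) : Subsingleton (Abelian.Ext.{u} N S.X₂ n) :=
  subsingleton_of_forall_eq 0 fun x ↦ by
    obtain ⟨y, rfl⟩ := exists_extMap_f_eq hS (x := x) (Subsingleton.elim _ _)
    rw [Subsingleton.elim y 0, map_zero]

lemma extMap_g_bijective {n : ℕ} (h : Subsingleton (Abelian.Ext.{u} N S.X₁ n))
    (h' : Subsingleton (Abelian.Ext.{u} N S.X₁ (n + 1))) :
    Function.Bijective (extMap N S.g n) := by
  refine ⟨(injective_iff_map_eq_zero _).2 fun x hx ↦ ?_, fun y ↦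
    exists_extMap_g_eq hS (Subsingleton.elim _ _)⟩
  obtain ⟨y, rfl⟩ := exists_extMap_f_eq hS hx
  rw [Subsingleton.elim y 0, map_zero]

lemma extMap_f_bijective {n : ℕ} (h : Subsingleton (Abelian.Ext.{u} N S.X₃ n))
    (h' : ∀ m, m + 1 = n → Subsingleton (Abelian.Ext.{u} N S.X₃ m)) :
    Function.Bijective (extMap N S.f n) := by
  refine ⟨?_, fun y ↦ exists_extMap_f_eq hS (Subsingleton.elim _ _)⟩
  obtain - | n := n
  · have := hS.mono_f
    exact Abelian.Ext.postcomp_mk₀_injective_of_mono N S.f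
  · refine (injective_iff_map_eq_zero _).2 fun x hx ↦ ?_
    obtain ⟨y, rfl⟩ := exists_extConnecting_eq hS hx
    have := h' n rfl
    rw [Subsingleton.elim y 0, map_zero]

lemma subsingleton_ext_zero_of_shortExact (h : Subsingleton (Abelian.Ext.{u} N S.X₂ 0)) :
    Subsingleton (Abelian.Ext.{u} N S.X₁ 0) := by
  have := hS.mono_f
  exact (show Function.Injective (extMap N S.f 0) from
    Abelian.Ext.postcomp_mk₀_injective_of_mono N S.f).subsingleton

lemma extConnecting_bijective (h : ∀ n, Subsingleton (Abelian.Ext.{u} N S.X₂ n)) (n : ℕ) :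
    Function.Bijective (extConnecting hS N n) := by
  refine ⟨(injective_iff_map_eq_zero _).2 fun x hx ↦ ?_, fun y ↦
    exists_extConnecting_eq hS (Subsingleton.elim _ _)⟩
  obtain ⟨y, rfl⟩ := exists_extMap_g_eq hS hx
  rw [Subsingleton.elim y 0, map_zero]

end LongExactSequence

variable {N}

/-- A torsion module has no extensions by a torsion-free injective module. -/
lemma IsTorsionIdeal.subsingleton_ext (hN : IsTorsionIdeal 𝔞 N) {I : ModuleCat.{u} R}
    [Injective I] (hI : powTorsion 𝔞 I = ⊥) (n : ℕ) : Subsingleton (Abelian.Ext.{u} N I n) := by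
  obtain - | n := n
  · refine subsingleton_of_forall_eq 0 fun x ↦ ?_
    obtain ⟨f, rfl⟩ := (Abelian.Ext.mk₀_bijective N I).2 x
    rw [Abelian.Ext.mk₀_eq_zero_iff]
    ext m
    have := map_mem_powTorsion f.hom (hN m)
    rwa [hI] at this
  · exact subsingleton_of_forall_eq 0 fun x ↦ Abelian.Ext.eq_zero_of_injective x

/-- Extensions of `R ⧸ 𝔞 ^ k` by a torsion module in positive degrees die in the limit. -/
lemma IsTorsionIdeal.exists_extPowMap_eq_zero [IsNoetherianRing R] (j : ℕ)
    {T : ModuleCat.{u} R} (hT : IsTorsionIdeal 𝔞 T) {k : ℕ}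
    (x : Abelian.Ext.{u} (powQuot 𝔞 k) T (j + 1)) :
    ∃ l, ∃ h : k ≤ l, extPowMap 𝔞 T (j + 1) h x = 0 := by
  induction j generalizing T with
  | zero =>
    obtain ⟨J, T', f, g, w, hS, _, hJ, -⟩ := hT.exists_shortExact
    obtain ⟨y, rfl⟩ := exists_extConnecting_eq hS (x := x) (Abelian.Ext.eq_zero_of_injective _)
    obtain ⟨p, rfl⟩ := (Abelian.Ext.mk₀_bijective _ _).2 y
    obtain ⟨b, hb⟩ := (ModuleCat.epi_iff_surjective g).1 hS.epi_g (p.hom 1)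
    obtain ⟨l, hl⟩ := hJ b
    let q : (R ⧸ 𝔞 ^ max k l) →ₗ[R] J := Submodule.liftQ _ (LinearMap.toSpanSingleton R J b)
      fun a ha ↦ hl a (Ideal.pow_le_pow_right (le_max_right k l) ha)
    have hq : ModuleCat.ofHom q ≫ g = powQuotMap 𝔞 (le_max_left k l) ≫ p := by
      ext
      exact (congrArg g.hom (one_smul R b)).trans hb
    refine ⟨max k l, le_max_left _ _, ?_⟩
    rw [extConnecting_apply, extPowMap_comp, extPowMap_apply, Abelian.Ext.mk₀_comp_mk₀, ← hq,
      ← Abelian.Ext.mk₀_comp_mk₀]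
    exact extConnecting_extMap hS _
  | succ j ih =>
    obtain ⟨J, T', f, g, w, hS, _, -, hT'⟩ := hT.exists_shortExact
    obtain ⟨y, rfl⟩ := exists_extConnecting_eq hS (x := x) (Abelian.Ext.eq_zero_of_injective _)
    obtain ⟨l, h, hl⟩ := ih hT' y
    refine ⟨l, h, ?_⟩
    rw [extConnecting_apply, extPowMap_comp]
    exact (congrArg (extConnecting hS _ _) hl).trans (map_zero _)

lemma extPowMap_extMap {M M' : ModuleCat.{u} R} (f : M ⟶ M') (n : ℕ) {k l : ℕ} (h : k ≤ l)
    (x : Abelian.Ext.{u} (powQuot 𝔞 k) M n) :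
    extPowMap 𝔞 M' n h (extMap _ f n x) = extMap _ f n (extPowMap 𝔞 M n h x) :=
  extPowMap_comp 𝔞 h x _ (add_zero n)

lemma extPowMap_extConnecting {S : ShortComplex (ModuleCat.{u} R)} (hS : S.ShortExact) (n : ℕ)
    {k l : ℕ} (h : k ≤ l) (x : Abelian.Ext.{u} (powQuot 𝔞 k) S.X₃ n) :
    extPowMap 𝔞 S.X₁ (n + 1) h (extConnecting hS _ n x) =
      extConnecting hS _ n (extPowMap 𝔞 S.X₃ n h x) :=
  extPowMap_comp 𝔞 h x _ rfl

variable (𝔞) in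
lemma isLocalCohomology_zero (M : ModuleCat.{u} R) :
    IsLocalCohomology 𝔞 0 M (powTorsion 𝔞 M) := by
  let ev (k : ℕ) : Abelian.Ext.{u} (powQuot 𝔞 k) M 0 →ₗ[R] M :=
    LinearMap.applyₗ (1 : R ⧸ 𝔞 ^ k) ∘ₗ ModuleCat.homLinearEquiv.toLinearMap ∘ₗ
      (Abelian.Ext.linearEquiv₀ (R := R)).toLinearMap
  have hev {k : ℕ} (f : powQuot 𝔞 k ⟶ M) : ev k (Abelian.Ext.mk₀ f) = f.hom 1 :=
    congr(ModuleCat.Hom.hom $(Abelian.Ext.addEquiv₀.apply_symm_apply f) 1)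
  have hmem (k : ℕ) (x) : ev k x ∈ powTorsion 𝔞 M :=
    map_mem_powTorsion (Abelian.Ext.addEquiv₀ x).hom (IsTorsionIdeal.quotient_pow k _)
  refine ⟨fun k ↦ (ev k).codRestrict _ (hmem k), ?_, ?_, ?_⟩
  · intro k l h x
    obtain ⟨f, rfl⟩ := (Abelian.Ext.mk₀_bijective _ _).2 x
    refine Subtype.ext ?_
    simp only [LinearMap.codRestrict_apply, extPowMap_apply, Abelian.Ext.mk₀_comp_mk₀, hev]
    rfl
  · rintro ⟨y, n, hn⟩
    refine ⟨n, Abelian.Ext.mk₀ (ModuleCat.ofHom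
      (Submodule.liftQ _ (LinearMap.toSpanSingleton R M y) hn)), Subtype.ext ?_⟩
    rw [LinearMap.codRestrict_apply, hev]
    exact one_smul R y
  · intro k x hx
    obtain ⟨f, rfl⟩ := (Abelian.Ext.mk₀_bijective _ _).2 x
    refine ⟨k, le_rfl, ?_⟩
    rw [extPowMap_refl, Abelian.Ext.mk₀_eq_zero_iff]
    ext
    exact (hev f).symm.trans congr($hx)

namespace IsLocalCohomology

variable {L : Type u} [AddCommGroup L] [Module R L] {i : ℕ}

lemma of_quotient_powTorsion [IsNoetherianRing R] {M : ModuleCat.{u} R}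
    (h : IsLocalCohomology 𝔞 (i + 1) (.of R (M ⧸ powTorsion 𝔞 M)) L) :
    IsLocalCohomology 𝔞 (i + 1) M L := by
  have hS := shortExact_powTorsionShortComplex (𝔞 := 𝔞) M
  have hT := isTorsionIdeal_powTorsion (𝔞 := 𝔞) M
  refine h.of_map (fun k ↦ extMap _ (powTorsionShortComplex 𝔞 M).g (i + 1))
    (fun k l h x ↦ (extPowMap_extMap _ _ h x).symm) (fun k x hx ↦ ?_) (fun k y ↦ ?_)
  · obtain ⟨y, rfl⟩ := exists_extMap_f_eq hS hx
    obtain ⟨l, h, hl⟩ := IsTorsionIdeal.exists_extPowMap_eq_zero i hT y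
    exact ⟨l, h, by rw [extPowMap_extMap, hl, map_zero]⟩
  · obtain ⟨l, h, hl⟩ := IsTorsionIdeal.exists_extPowMap_eq_zero (i + 1) hT
      (extConnecting hS _ _ y)
    rw [extPowMap_extConnecting] at hl
    exact ⟨l, h, exists_extMap_g_eq hS hl⟩

lemma of_shortExact {S : ShortComplex (ModuleCat.{u} R)} (hS : S.ShortExact) [Injective S.X₂]
    (hI : powTorsion 𝔞 S.X₂ = ⊥) (h : IsLocalCohomology 𝔞 i S.X₃ L) :
    IsLocalCohomology 𝔞 (i + 1) S.X₁ L := by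
  let e (k : ℕ) : Abelian.Ext.{u} (powQuot 𝔞 k) S.X₃ i ≃ₗ[R]
      Abelian.Ext.{u} (powQuot 𝔞 k) S.X₁ (i + 1) :=
    .ofBijective _ (extConnecting_bijective hS
      (fun n ↦ (IsTorsionIdeal.quotient_pow k).subsingleton_ext hI n) i)
  refine h.of_map (fun k ↦ (e k).symm) (fun k l h x ↦ ?_) (fun k x hx ↦ ?_) (fun k y ↦ ?_)
  · obtain ⟨x, rfl⟩ := (e k).surjective x
    have : extPowMap 𝔞 S.X₁ (i + 1) h (e k x) = e l (extPowMap 𝔞 S.X₃ i h x) :=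
      extPowMap_extConnecting hS i h x
    simp [this]
  · exact ⟨k, le_rfl, by simp [show x = 0 by simpa using hx]⟩
  · exact ⟨k, le_rfl, e k y, by simp [extPowMap_refl]⟩

end IsLocalCohomology

end

section

variable {R : Type u} [CommRing R] [IsNoetherianRing R] (𝔞 : Ideal R)

omit [IsNoetherianRing R] in
lemma nonempty_localCohomology_zero_equiv (M : ModuleCat.{u} R) :
    Nonempty ((localCohomology 𝔞 0).obj M ≃ₗ[R] powTorsion 𝔞 M) :=
  (isLocalCohomology_localCohomology 𝔞 0 M).nonempty_equiv (isLocalCohomology_zero 𝔞 M)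

/-- Dimension shifting: every `M` admits an `M'` with `H^i(M') ≃ H^{i+1}(M)` for all `i`, such that
for every torsion module `N` the modules `Ext^n(N, M')` and `Ext^{n+1}(N, M ⧸ Γ M)` agree. -/
lemma exists_localCohomology_shift (M : ModuleCat.{u} R) :
    ∃ M' : ModuleCat.{u} R,
      (∀ i, Nonempty ((localCohomology 𝔞 i).obj M' ≃ₗ[R] (localCohomology 𝔞 (i + 1)).obj M)) ∧
      ∀ N : ModuleCat.{u} R, IsTorsionIdeal 𝔞 N →
        Subsingleton (Abelian.Ext.{u} N (powTorsionShortComplex 𝔞 M).X₃ 0) ∧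
        ∀ n, Nonempty (Abelian.Ext.{u} N M' n ≃ₗ[R]
          Abelian.Ext.{u} N (powTorsionShortComplex 𝔞 M).X₃ (n + 1)) := by
  obtain ⟨I, M', f, g, w, hS, _, hI⟩ := exists_shortExact_quotient_powTorsion (𝔞 := 𝔞) M
  refine ⟨M', fun i ↦ ?_, fun N hN ↦ ⟨?_, fun n ↦ ?_⟩⟩
  · exact (IsLocalCohomology.of_quotient_powTorsion (IsLocalCohomology.of_shortExact hS hI
      (isLocalCohomology_localCohomology 𝔞 i M'))).nonempty_equiv
      (isLocalCohomology_localCohomology 𝔞 (i + 1) M)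
  · exact subsingleton_ext_zero_of_shortExact hS (hN.subsingleton_ext hI 0)
  · exact ⟨.ofBijective _ (extConnecting_bijective hS (hN.subsingleton_ext hI) n)⟩

namespace IsTorsionIdeal

variable {𝔞} {N : ModuleCat.{u} R} (hN : IsTorsionIdeal 𝔞 N)

include hN

/-- `Ext^n(N, M ⧸ Γ M)` vanishes if the groups `Ext^j(N, H^i(M))` with `1 ≤ i` and `i + j = n`
do. -/
lemma subsingleton_ext_quotient_powTorsion (n : ℕ) (M : ModuleCat.{u} R)
    (h : ∀ i j, i + 1 + j = n →
      Subsingleton (Abelian.Ext.{u} N ((localCohomology 𝔞 (i + 1)).obj M) j)) :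
    Subsingleton (Abelian.Ext.{u} N (powTorsionShortComplex 𝔞 M).X₃ n) := by
  induction n generalizing M with
  | zero =>
    obtain ⟨M', -, hext⟩ := exists_localCohomology_shift 𝔞 M
    exact (hext N hN).1
  | succ n ih =>
    obtain ⟨M', hM', hext⟩ := exists_localCohomology_shift 𝔞 M
    have h' (i j : ℕ) (hij : i + j = n) :
        Subsingleton (Abelian.Ext.{u} N ((localCohomology 𝔞 i).obj M') j) :=
      have := h i j (by lia)
      (extCongr N (hM' i).some j).injective.subsingleton
    obtain ⟨e⟩ := (hext N hN).2 n
    obtain ⟨e₀⟩ := nonempty_localCohomology_zero_equiv 𝔞 M'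
    have := h' 0 n (zero_add n)
    have : Subsingleton (Abelian.Ext.{u} N M' n) :=
      subsingleton_ext_of_shortExact (shortExact_powTorsionShortComplex (𝔞 := 𝔞) M')
        (extCongr N e₀ n).symm.injective.subsingleton
        (ih M' fun i j hij ↦ h' _ _ hij)
    exact e.symm.injective.subsingleton

lemma nonempty_ext_equiv_ext_localCohomology (s t : ℕ) (M : ModuleCat.{u} R)
    (h : ∀ i j, (i + j = s + t ∧ i ≠ t) ∨ (i + j = s + t + 1 ∧ i ≤ t) ∨
        (i + j + 1 = s + t ∧ t ≤ i) →
      Subsingleton (Abelian.Ext.{u} N ((localCohomology 𝔞 i).obj M) j)) :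
    Nonempty (Abelian.Ext.{u} N M (s + t) ≃ₗ[R]
      Abelian.Ext.{u} N ((localCohomology 𝔞 t).obj M) s) := by
  have hS := shortExact_powTorsionShortComplex (𝔞 := 𝔞) M
  obtain ⟨e₀⟩ := nonempty_localCohomology_zero_equiv 𝔞 M
  induction t generalizing M with
  | zero =>
    have hf : Function.Bijective (extMap N (powTorsionShortComplex 𝔞 M).f s) :=
      extMap_f_bijective hS
        (hN.subsingleton_ext_quotient_powTorsion s M fun i j hij ↦ h _ _ (by lia))
        fun m hm ↦ hN.subsingleton_ext_quotient_powTorsion m M fun i j hij ↦ h _ _ (by lia)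
    exact ⟨(LinearEquiv.ofBijective _ hf).symm.trans (extCongr N e₀ s).symm⟩
  | succ t ih =>
    obtain ⟨M', hM', hext⟩ := exists_localCohomology_shift 𝔞 M
    have hΓ (j : ℕ) (hj : j = s + (t + 1) ∨ j = s + (t + 1) + 1) :
        Subsingleton (Abelian.Ext.{u} N (powTorsionShortComplex 𝔞 M).X₁ j) :=
      have := h 0 j (by lia)
      (extCongr N e₀ j).symm.injective.subsingleton
    have hg : Function.Bijective (extMap N (powTorsionShortComplex 𝔞 M).g (s + (t + 1))) :=
      extMap_g_bijective hS (hΓ _ (.inl rfl)) (hΓ _ (.inr rfl))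
    obtain ⟨e⟩ := (hext N hN).2 (s + t)
    obtain ⟨e'⟩ := ih M' (fun i j hij ↦
        have := h (i + 1) j (by lia)
        (extCongr N (hM' i).some j).injective.subsingleton)
      (shortExact_powTorsionShortComplex M') (nonempty_localCohomology_zero_equiv 𝔞 M').some
    exact ⟨(LinearEquiv.ofBijective _ hg).trans
      (e.symm.trans (e'.trans (extCongr N (hM' t).some s)))⟩

end IsTorsionIdeal

end

/-- Yang–Shen, Corollary 4.6: let `𝔞` be a proper ideal of a noetherian ring `R`, `N` a
finitely generated `𝔞`-torsion `R`-module, `M` an `R`-module and `s, t ≥ 0` integers such that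
(1) `Ext^{s+t-i}_R(N, H^i_𝔞(M)) = 0` for `0 ≤ i < t` and for `t+1 ≤ i ≤ s+t`;
(2) `Ext^{s+1+i}_R(N, H^{t-i}_𝔞(M)) = 0` for `0 ≤ i ≤ t`;
(3) `Ext^{s-1-i}_R(N, H^{t+i}_𝔞(M)) = 0` for `0 ≤ i ≤ s-1`.
Then `Ext^{s+t}_R(N, M) ≅ Ext^s_R(N, H^t_𝔞(M))`. -/
theorem ext_isomorphic_ext_localCohomology_of_torsion
    {R : Type u} [CommRing R] [IsNoetherianRing R] (𝔞 : Ideal R) (ha : 𝔞 ≠ ⊤)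
    (N : ModuleCat.{u} R) (hfg : Module.Finite R N) (htor : IsTorsionIdeal 𝔞 N)
    (M : ModuleCat.{u} R) (s t : ℕ)
    (h1 : ∀ i : ℕ, (i < t ∨ (t + 1 ≤ i ∧ i ≤ s + t)) →
      Subsingleton (extObj N ((localCohomology 𝔞 i).obj M) (s + t - i)))
    (h2 : ∀ i : ℕ, i ≤ t →
      Subsingleton (extObj N ((localCohomology 𝔞 (t - i)).obj M) (s + 1 + i)))
    (h3 : ∀ i : ℕ, i < s →
      Subsingleton (extObj N ((localCohomology 𝔞 (t + i)).obj M) (s - 1 - i))) :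
    Nonempty ((extObj N M (s + t)) ≃ₗ[R]
      (extObj N ((localCohomology 𝔞 t).obj M) s)) := by
  obtain ⟨e⟩ := htor.nonempty_ext_equiv_ext_localCohomology s t M fun i j hij ↦ by
    have : Subsingleton (extObj N ((localCohomology 𝔞 i).obj M) j) := by
      obtain ⟨hij, hi⟩ | ⟨hij, hi⟩ | ⟨hij, hi⟩ := hij
      · obtain rfl : j = s + t - i := by lia
        exact h1 i (by lia)
      · have := h2 (t - i) (by lia)
        rwa [show t - (t - i) = i by lia, show s + 1 + (t - i) = j by lia] at this
      · have := h3 (i - t) (by lia)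
        rwa [show t + (i - t) = i by lia, show s - 1 - (i - t) = j by lia] at this
    exact (extEquiv N _ j).injective.subsingleton
  exact ⟨(extEquiv N M (s + t)).symm.trans (e.trans (extEquiv N _ s))⟩
end
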